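/- arXiv:0907.3853 — 11 statements merged into one kernel-verified Lean document; each statement's English description precedes it below -/
import Mathlib

section
/- For every natural number n, the number of pairs (n₁, M) such that 1 ≤ n₁ ≤ n−1, n₂ = n − n₁, and M = [(m_1,μ_1),…,(m_r,μ_r)] is an admissible list satisfying m_i ≤ n₁ and μ_i ≤ n₂ for all i, m_1 > 0, and (in case r = 1) μ_1 < n₂, equals F(n+6) − (n² + 4n + 8). (This number H(n) counts, up to isomorphism, the complete simple games with n voters of exactly two different types, via the Carreras–Freixas parametrization.) -/
/-- A matrix with `r ≥ 1` rows and two columns of nonnegative integers,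
represented as a nonempty list of pairs, is *admissible* if its first
components are strictly decreasing and its row sums are strictly increasing. -/
def Admissible (M : List (ℕ × ℕ)) : Prop :=
  M ≠ [] ∧ M.Chain' (fun p q => q.1 < p.1 ∧ p.1 + p.2 < q.1 + q.2)

/-- The set of admissible lists counted by `G(a,b)`: all entries of the first
column are at most `a`, all entries of the second column are at most `b`,
the first entry of the first row is positive, and if there is only one row
then its second entry is strictly less than `b`. -/
def Gset (a b : ℕ) : Set (List (ℕ × ℕ)) :=
  {M | Admissible M ∧ (∀ p ∈ M, p.1 ≤ a ∧ p.2 ≤ b) ∧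
       (∃ p, M.head? = some p ∧ 0 < p.1) ∧
       (M.length = 1 → ∃ p, M.head? = some p ∧ p.2 < b)}

/-- The set counted by `H(n)`: pairs `(n₁, M)` with `1 ≤ n₁ ≤ n - 1` and
`M` an admissible list counted by `G(n₁, n - n₁)`. -/
def Hset (n : ℕ) : Set (ℕ × List (ℕ × ℕ)) :=
  {x | 1 ≤ x.1 ∧ x.1 ≤ n - 1 ∧ x.2 ∈ Gset x.1 (n - x.1)}

/-- number of tails -/
def cN : ℕ → ℕ → ℕ
  | 0, _ => 1
  | m + 1, k => ∑ j ∈ Finset.range (k - 1 + 1), cN m j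

lemma cN_zero (m : ℕ) : cN m 0 = 1 := by
  induction m with
  | zero => rfl
  | succ m ih => simp [cN, ih]

lemma cN_one (m : ℕ) : cN m 1 = 1 := by
  cases m with
  | zero => rfl
  | succ m => simp [cN, cN_zero]

lemma cN_rec (m k : ℕ) : cN (m + 1) (k + 2) = cN (m + 1) (k + 1) + cN m (k + 1) := by
  simp [cN, Finset.sum_range_succ]

open Finset in
lemma sp_rec (n : ℕ) : (∑ x ∈ antidiagonal (n + 2), cN x.1 (x.2 + 1)) =
    (∑ x ∈ antidiagonal (n + 1), cN x.1 (x.2 + 1)) +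
      (∑ x ∈ antidiagonal n, cN x.1 (x.2 + 1)) + 1 := by
  rw [Finset.Nat.sum_antidiagonal_succ, Finset.Nat.sum_antidiagonal_succ',
    Finset.Nat.sum_antidiagonal_succ (n := n)]
  simp only [cN_rec, Finset.sum_add_distrib, zero_add, cN_one]
  simp only [cN]
  ring

open Finset in
lemma sp_eq (n : ℕ) : (∑ x ∈ antidiagonal n, cN x.1 (x.2 + 1)) + 1 = Nat.fib (n + 3) := by
  induction n using Nat.twoStepInduction with
  | zero => decide
  | one => decide
  | more n h1 h2 =>
    rw [sp_rec]
    have := Nat.fib_add_two (n := n + 3)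
    simp only [Nat.add_assoc, Nat.reduceAdd] at *
    omega

open Finset in
lemma p_eq (n : ℕ) : (∑ x ∈ antidiagonal n, cN (x.1 + 1) (x.2 + 1)) + 2 = Nat.fib (n + 4) := by
  have := sp_eq (n + 1)
  rw [Finset.Nat.sum_antidiagonal_succ] at this
  simp only [cN] at this ⊢
  simp only [Nat.add_assoc, Nat.reduceAdd] at *
  omega

open Finset in
lemma ps1 (f : ℕ → ℕ → ℕ) (n : ℕ) :
    (∑ x ∈ antidiagonal (n + 1), ∑ m ∈ range (x.1 + 1), f m x.2) =
    (∑ x ∈ antidiagonal n, ∑ m ∈ range (x.1 + 1), f m x.2) +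
      ∑ x ∈ antidiagonal (n + 1), f x.1 x.2 := by
  rw [Finset.Nat.sum_antidiagonal_succ, Finset.Nat.sum_antidiagonal_succ]
  simp only [Finset.sum_range_succ _ (_ + 1), Finset.sum_add_distrib]
  simp
  ring

open Finset in
lemma ps2 (f : ℕ → ℕ → ℕ) (n : ℕ) :
    (∑ x ∈ antidiagonal (n + 1), ∑ m ∈ range (x.2 + 1), f x.1 m) =
    (∑ x ∈ antidiagonal n, ∑ m ∈ range (x.2 + 1), f x.1 m) +
      ∑ x ∈ antidiagonal (n + 1), f x.1 x.2 := by
  rw [Finset.Nat.sum_antidiagonal_succ', Finset.Nat.sum_antidiagonal_succ']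
  simp only [Finset.sum_range_succ _ (_ + 1), Finset.sum_add_distrib]
  simp
  ring

open Finset in
lemma r_eq (n : ℕ) : (∑ x ∈ antidiagonal n, ∑ m ∈ range (x.1 + 1), cN (m + 1) (x.2 + 1))
    + (2 * n + 7) = Nat.fib (n + 6) := by
  induction n with
  | zero => decide
  | succ n ih =>
    rw [ps1 (fun m k => cN (m + 1) (k + 1))]
    have h := p_eq (n + 1)
    have := Nat.fib_add_two (n := n + 5)
    simp only [Nat.add_assoc, Nat.reduceAdd] at *
    omega

open Finset in
lemma h_eq (n : ℕ) : (∑ x ∈ antidiagonal n, ∑ k ∈ range (x.2 + 1), ∑ m ∈ range (x.1 + 1),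
      cN (m + 1) (k + 1))
    + ((n + 2) ^ 2 + 4 * (n + 2) + 8) = Nat.fib (n + 8) := by
  induction n with
  | zero => decide
  | succ n ih =>
    rw [ps2 (fun a k => ∑ m ∈ range (a + 1), cN (m + 1) (k + 1))]
    have h := r_eq (n + 1)
    have := Nat.fib_add_two (n := n + 7)
    simp only [Nat.add_assoc, Nat.reduceAdd] at *
    nlinarith

/-- the step relation -/
def StepRel (p q : ℕ × ℕ) : Prop := q.1 < p.1 ∧ p.1 + p.2 < q.1 + q.2

open Finset in
/-- tails after a row -/
def Lf (b : ℕ) : ℕ → ℕ → Finset (List (ℕ × ℕ))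
  | 0, _ => {[]}
  | m + 1, μ => Lf b m (μ + 1) ∪
      ((Finset.Icc (μ + 2) b).sigma (fun ν => Lf b m ν)).image (fun x => (m, x.1) :: x.2)

lemma mem_Lf (b m : ℕ) : ∀ (μ : ℕ) (t : List (ℕ × ℕ)), t ∈ Lf b m μ ↔
    (List.IsChain StepRel ((m, μ) :: t) ∧ ∀ q ∈ t, q.2 ≤ b) := by
  induction m with
  | zero =>
    intro μ t
    cases t <;> simp [Lf, StepRel]
  | succ m ih =>
    intro μ t
    simp only [Lf, Finset.mem_union, Finset.mem_image, Finset.mem_sigma, ih, Finset.mem_Icc]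
    cases t with
    | nil => simp
    | cons q t =>
      obtain ⟨x, y⟩ := q
      simp only [List.isChain_cons_cons, List.mem_cons, forall_eq_or_imp, List.cons.injEq,
        Prod.mk.injEq, Sigma.exists, StepRel]
      constructor
      · rintro (⟨⟨⟨h1, h2⟩, h3⟩, h4, h5⟩ | ⟨y', t', ⟨⟨h1, h2⟩, h3, h4⟩, ⟨rfl, rfl⟩, rfl⟩)
        · exact ⟨⟨⟨by omega, by omega⟩, h3⟩, h4, h5⟩
        · exact ⟨⟨⟨by omega, by omega⟩, h3⟩, h2, h4⟩
      · rintro ⟨⟨⟨h1, h2⟩, h3⟩, h4, h5⟩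
        rcases Nat.lt_or_ge x m with h | h
        · exact Or.inl ⟨⟨⟨by omega, by omega⟩, h3⟩, h4, h5⟩
        · obtain rfl : x = m := by omega
          exact Or.inr ⟨y, t, ⟨⟨by omega, h4⟩, h3, h5⟩, ⟨rfl, rfl⟩, rfl⟩

lemma sum_refl (f : ℕ → ℕ) (b : ℕ) : ∀ k c, c + k = b + 1 →
    ∑ ν ∈ Finset.Icc c b, f (b - ν) = ∑ j ∈ Finset.range k, f j := by
  intro k
  induction k with
  | zero => intro c h; rw [Finset.Icc_eq_empty (by omega)]; simp
  | succ k ih =>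
    intro c h
    rw [Finset.sum_range_succ, ← ih (c + 1) (by omega),
      ← Finset.insert_Icc_succ_left_eq_Icc (by omega : c ≤ b)]
    rw [Finset.sum_insert (by simp), add_comm]
    congr 2
    omega

lemma card_Lf (b m : ℕ) : ∀ μ : ℕ, (Lf b m μ).card = cN m (b - μ) := by
  induction m with
  | zero => intro μ; simp [Lf, cN]
  | succ m ih =>
    intro μ
    rw [Lf, Finset.card_union_of_disjoint, Finset.card_image_of_injective, Finset.card_sigma]
    · simp only [ih, cN]
      rw [Finset.sum_range_succ, add_comm, Nat.sub_sub]
      congr 1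
      rcases Nat.lt_or_ge μ b with h | h
      · exact sum_refl _ _ _ _ (by omega)
      · rw [Finset.Icc_eq_empty (by omega)]
        simp [show b - (μ + 1) = 0 by omega]
    · rintro ⟨x, t⟩ ⟨y, s⟩ h
      simp at h
      obtain ⟨rfl, rfl⟩ := h
      rfl
    · rw [Finset.disjoint_left]
      intro t ht h2
      simp only [Finset.mem_image] at h2
      obtain ⟨⟨y, s⟩, -, rfl⟩ := h2
      rw [mem_Lf] at ht
      simp [StepRel] at ht

lemma mem_Gset (a b : ℕ) (M : List (ℕ × ℕ)) : M ∈ Gset a b ↔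
    ∃ m μ t, M = (m, μ) :: t ∧ 0 < m ∧ m ≤ a ∧ μ < b ∧ t ∈ Lf b m μ := by
  simp only [mem_Lf]
  cases M with
  | nil => simp [Gset, Admissible]
  | cons p t =>
    obtain ⟨m, μ⟩ := p
    have key : (m, μ) :: t ∈ Gset a b ↔ 0 < m ∧ m ≤ a ∧ μ < b ∧
        List.IsChain StepRel ((m, μ) :: t) ∧ ∀ q ∈ t, q.2 ≤ b := by
      change (((m, μ) :: t ≠ [] ∧ List.IsChain StepRel ((m, μ) :: t)) ∧ _) ↔ _
      constructor
      · rintro ⟨⟨-, h1⟩, h2, ⟨p, h3, h4⟩, h5⟩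
        simp at h3; subst h3
        have h6 := h2 (m, μ) (by simp)
        refine ⟨h4, h6.1, ?_, h1, fun q hq => (h2 q (by simp [hq])).2⟩
        cases t with
        | nil => simpa using h5
        | cons q t =>
          have h7 := h2 q (by simp)
          simp only [List.isChain_cons_cons, StepRel] at h1
          omega
      · rintro ⟨h1, h2, h3, h4, h5⟩
        refine ⟨⟨by simp, h4⟩, ?_, ⟨_, rfl, h1⟩, fun _ => ⟨_, rfl, h3⟩⟩
        have : ∀ (t : List (ℕ × ℕ)) (p : ℕ × ℕ), p.1 ≤ a → List.IsChain StepRel (p :: t) →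
            ∀ q ∈ t, q.1 ≤ a := by
          intro t
          induction t with
          | nil => simp
          | cons r t ih =>
            intro p hp hc q hq
            rw [List.isChain_cons_cons] at hc
            have hr : r.1 ≤ a := hc.1.1.le.trans hp
            rcases List.mem_cons.1 hq with rfl | hq
            · exact hr
            · exact ih r hr hc.2 q hq
        intro p hp
        rcases List.mem_cons.1 hp with rfl | hp
        · exact ⟨h2, h3.le⟩
        · exact ⟨this t _ h2 h4 p hp, h5 p hp⟩
    rw [key]
    constructor
    · rintro ⟨h1, h2, h3, h4⟩
      exact ⟨m, μ, t, rfl, h1, h2, h3, h4⟩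
    · rintro ⟨m', μ', t', h, h1⟩
      simp at h
      obtain ⟨⟨rfl, rfl⟩, rfl⟩ := h
      exact h1

open Finset in
/-- finset version of Hset -/
def Hf (n : ℕ) : Finset (Σ _ : ℕ × ℕ, Σ _ : ℕ, Σ _ : ℕ, List (ℕ × ℕ)) :=
  (antidiagonal n).sigma fun x => (Icc 0 x.2).sigma fun μ => (range (x.1 + 1)).sigma fun m =>
    Lf (x.2 + 1) (m + 1) μ

lemma card_Hf (n : ℕ) : (Hf n).card + ((n + 2) ^ 2 + 4 * (n + 2) + 8) = Nat.fib (n + 8) := by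
  rw [← h_eq, Hf, Finset.card_sigma]
  congr 1
  apply Finset.sum_congr rfl
  intro x _
  rw [← sum_refl (fun k => ∑ m ∈ Finset.range (x.1 + 1), cN (m + 1) (k + 1)) x.2 (x.2 + 1) 0
    (by omega), Finset.card_sigma]
  apply Finset.sum_congr rfl
  intro μ hμ
  rw [Finset.card_sigma]
  apply Finset.sum_congr rfl
  intro m _
  rw [card_Lf]
  congr 1
  simp at hμ
  omega

lemma Hset_eq (n : ℕ) : Hset (n + 2) =
    (fun y : (Σ _ : ℕ × ℕ, Σ _ : ℕ, Σ _ : ℕ, List (ℕ × ℕ)) =>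
      (y.1.1 + 1, (y.2.2.1 + 1, y.2.1) :: y.2.2.2)) '' (Hf n : Set _) := by
  ext ⟨a, M⟩
  simp only [Hset, Set.mem_ofPred_eq, mem_Gset, Set.mem_image, Hf, Finset.mem_coe,
    Finset.mem_sigma, Finset.mem_Icc, Finset.mem_range]
  constructor
  · rintro ⟨h1, h2, m, μ, t, rfl, h3, h4, h5, h6⟩
    refine ⟨⟨(a - 1, n + 1 - a), μ, m - 1, t⟩, ⟨?_, ?_, ?_, ?_⟩, ?_⟩
    · exact Finset.HasAntidiagonal.mem_antidiagonal.2 (by dsimp; omega)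
    · dsimp; omega
    · dsimp; omega
    · dsimp
      rwa [show n + 1 - a + 1 = n + 2 - a by omega, show m - 1 + 1 = m by omega]
    · dsimp
      rw [show a - 1 + 1 = a by omega, show m - 1 + 1 = m by omega]
  · rintro ⟨⟨⟨i, j⟩, μ, m, t⟩, ⟨h1, h2, h3, h4⟩, h⟩
    simp only [Prod.mk.injEq] at h
    obtain ⟨rfl, rfl⟩ := h
    replace h1 := Finset.HasAntidiagonal.mem_antidiagonal.1 h1
    dsimp at h1 h2 h3 h4
    refine ⟨by omega, by omega, m + 1, μ, t, rfl, by omega, by omega, by omega, ?_⟩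
    rwa [show n + 2 - (i + 1) = j + 1 by omega]

/-- The number of complete simple games with `n` voters of exactly two
different types, up to isomorphism, is `F(n+6) - (n² + 4n + 8)`. -/
theorem count_complete_games_two_types (n : ℕ) :
    (Hset n).ncard = Nat.fib (n + 6) - (n ^ 2 + 4 * n + 8) := by
  rcases Nat.lt_or_ge n 2 with hn | hn
  · have : Hset n = ∅ := by
      ext x
      simp only [Hset, Set.mem_ofPred_eq, Set.mem_empty_iff_false, iff_false]
      rintro ⟨h1, h2, -⟩
      omega
    rw [this, Set.ncard_empty]
    interval_cases n <;> decide
  · obtain ⟨k, rfl⟩ : ∃ k, n = k + 2 := ⟨n - 2, by omega⟩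
    rw [Hset_eq, Set.ncard_image_of_injOn, Set.ncard_coe_finset]
    · have := card_Hf k
      simp only [Nat.add_assoc, Nat.reduceAdd] at *
      omega
    · rintro ⟨⟨i, j⟩, μ, m, t⟩ h ⟨⟨i', j'⟩, μ', m', t'⟩ h' he
      simp only [Hf, Finset.mem_coe, Finset.mem_sigma] at h h'
      have h1 := Finset.HasAntidiagonal.mem_antidiagonal.1 h.1
      have h2 := Finset.HasAntidiagonal.mem_antidiagonal.1 h'.1
      dsimp at h1 h2
      simp at he
      obtain ⟨rfl, ⟨rfl, rfl⟩, rfl⟩ := he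
      obtain rfl : j = j' := by omega
      rfl
end

section
/- Let a, s, b be natural numbers with a ≤ s and s + 2 ≤ a + b. Then N(a,s,b) = Σ_{k=0}^{a−1} C(a + b − 2 − s, k), where C denotes the binomial coefficient. -/
/-- The set of admissible lists counted by `N(a,s,b)`: the first row is
`(a, s - a)` (i.e. `m₁ = a` and `m₁ + μ₁ = s`) and the last row has second
component `b`. -/
def Nset (a s b : ℕ) : Set (List (ℕ × ℕ)) :=
  {M | Admissible M ∧
       (∃ p, M.head? = some p ∧ p.1 = a ∧ p.1 + p.2 = s) ∧
       (∃ q, M.getLast? = some q ∧ q.2 = b)}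

def Aok (b : ℕ) (M : List (ℕ × ℕ)) : Prop :=
  M.IsChain (fun p q => q.1 < p.1 ∧ p.1 + p.2 < q.1 + q.2) ∧ ∃ q, M.getLast? = some q ∧ q.2 = b

def Wset (b a s : ℕ) : Set (List (ℕ × ℕ)) :=
  {M | Aok b M ∧ ∃ p, M.head? = some p ∧ p.1 < a ∧ s < p.1 + p.2}

def Vset (b a s : ℕ) : Set (List (ℕ × ℕ)) :=
  {M | Aok b M ∧ ∃ p, M.head? = some p ∧ p.1 = a ∧ s < p.1 + p.2}

theorem mem_Nset_iff (a s b : ℕ) (M : List (ℕ × ℕ)) :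
    M ∈ Nset a s b ↔ Aok b M ∧ ∃ p, M.head? = some p ∧ p.1 = a ∧ p.1 + p.2 = s := by
  constructor
  · rintro ⟨⟨_, h⟩, h2, h3⟩
    exact ⟨⟨h, h3⟩, h2⟩
  · rintro ⟨⟨h, h3⟩, h2⟩
    refine ⟨⟨?_, h⟩, h2, h3⟩
    rintro rfl
    simp at h3

theorem Aok_cons_cons (b : ℕ) (p q : ℕ × ℕ) (l : List (ℕ × ℕ)) :
    Aok b (p :: q :: l) ↔ (q.1 < p.1 ∧ p.1 + p.2 < q.1 + q.2) ∧ Aok b (q :: l) := by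
  unfold Aok
  rw [List.isChain_cons_cons, List.getLast?_cons_cons, and_assoc]

theorem Aok_single (b : ℕ) (p : ℕ × ℕ) : Aok b [p] ↔ p.2 = b := by
  simp [Aok]

theorem Aok_le (b : ℕ) (l : List (ℕ × ℕ)) : ∀ p, Aok b (p :: l) → p.2 ≤ b := by
  induction l with
  | nil => intro p h; exact ((Aok_single b p).1 h).le
  | cons q l ih =>
    intro p h
    rw [Aok_cons_cons] at h
    have := ih q h.2
    omega

theorem Wset_empty (b a s : ℕ) (h : a + b ≤ s + 1) : Wset b a s = ∅ := by
  ext M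
  simp only [Set.mem_empty_iff_false, iff_false]
  rintro ⟨h1, p, hp, h2, h3⟩
  cases M with
  | nil => simp at hp
  | cons q l =>
    simp at hp
    subst hp
    have := Aok_le b l q h1
    omega

theorem Vset_empty (b a s : ℕ) (h : a + b ≤ s) : Vset b a s = ∅ := by
  ext M
  simp only [Set.mem_empty_iff_false, iff_false]
  rintro ⟨h1, p, hp, h2, h3⟩
  cases M with
  | nil => simp at hp
  | cons q l =>
    simp at hp
    subst hp
    have := Aok_le b l q h1
    omega

theorem Wset_zero (b s : ℕ) : Wset b 0 s = ∅ := by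
  ext M
  simp [Wset]

theorem Wset_succ (b a s : ℕ) :
    (Wset b (a+1) s).encard = (Wset b a s).encard + (Vset b a s).encard := by
  rw [← Set.encard_union_eq]
  · congr 1
    ext M
    simp only [Wset, Vset, Set.mem_union, Set.mem_ofPred_eq, ← and_or_left, ← exists_or,
      ← or_and_right, Nat.lt_succ_iff_lt_or_eq]
  · rw [Set.disjoint_left]
    rintro M ⟨_, p, hp, h, _⟩ ⟨_, q, hq, h', _⟩
    rw [hp] at hq
    cases hq
    omega

theorem Vset_succ (b a s : ℕ) :
    (Vset b a s).encard = (Vset b a (s+1)).encard + (Nset a (s+1) b).encard := by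
  rw [← Set.encard_union_eq]
  · congr 1
    ext M
    rw [Set.mem_union, mem_Nset_iff]
    simp only [Vset, Set.mem_ofPred_eq, ← and_or_left, ← exists_or]
    have : ∀ p : ℕ × ℕ, s < p.1 + p.2 ↔ (s + 1 < p.1 + p.2 ∨ p.1 + p.2 = s + 1) := by
      intro p; omega
    simp only [this]
  · rw [Set.disjoint_left]
    intro M h1 h2
    rw [mem_Nset_iff] at h2
    obtain ⟨_, p, hp, _, h⟩ := h1
    obtain ⟨_, q, hq, _, h'⟩ := h2
    rw [hp] at hq
    cases hq
    omega

theorem Nset_eq (b a s : ℕ) (h : a ≤ s) (hs : s ≠ a + b) :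
    (Nset a s b).encard = (Wset b a s).encard := by
  have : Nset a s b = (fun l => (a, s - a) :: l) '' Wset b a s := by
    ext M
    rw [mem_Nset_iff]
    constructor
    · rintro ⟨h1, p, hp, h2, h3⟩
      match M, hp, h1 with
      | [q], hp, h1 =>
        simp at hp
        subst hp
        rw [Aok_single] at h1
        omega
      | q :: r :: l, hp, h1 =>
        simp at hp
        subst hp
        rw [Aok_cons_cons] at h1
        refine ⟨r :: l, ⟨h1.2, r, rfl, by omega, by omega⟩, ?_⟩
        have : (a, s - a) = q := Prod.ext (by simp; omega) (by simp; omega)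
        simp [this]
    · rintro ⟨l, ⟨h1, p, hp, h2, h3⟩, rfl⟩
      match l, hp, h1 with
      | q :: l, hp, h1 =>
        simp at hp
        subst hp
        refine ⟨?_, (a, s - a), rfl, rfl, by simp; omega⟩
        rw [Aok_cons_cons]
        exact ⟨⟨h2, by simp; omega⟩, h1⟩
  rw [this, Function.Injective.encard_image]
  intro x y hxy
  simpa using hxy

theorem Nset_diag (b a : ℕ) : (Nset a (a + b) b).encard = 1 := by
  have : Nset a (a + b) b = {[(a, b)]} := by
    ext M
    rw [mem_Nset_iff, Set.mem_singleton_iff]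
    constructor
    · rintro ⟨h1, p, hp, h2, h3⟩
      match M, hp, h1 with
      | [q], hp, h1 =>
        simp at hp
        subst hp
        rw [Aok_single] at h1
        have : q = (a, b) := Prod.ext h2 h1
        rw [this]
      | q :: r :: l, hp, h1 =>
        simp at hp
        subst hp
        rw [Aok_cons_cons] at h1
        have := Aok_le b l r h1.2
        omega
    · rintro rfl
      exact ⟨(Aok_single _ _).2 rfl, (a, b), rfl, rfl, rfl⟩
  rw [this, Set.encard_singleton]

theorem sum_pascal (a n : ℕ) :
    ∑ k ∈ Finset.range (a+1), Nat.choose (n+1) k =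
    ∑ k ∈ Finset.range a, Nat.choose n k + ∑ k ∈ Finset.range (a+1), Nat.choose n k := by
  induction a with
  | zero => simp
  | succ a ih =>
    rw [Finset.sum_range_succ, ih, Finset.sum_range_succ _ (a+1), Finset.sum_range_succ _ a,
      Nat.choose_succ_succ]
    ring

theorem Vset_card (b a : ℕ) (hW : ∀ n s, a ≤ s → s + 2 + n = a + b →
    (Wset b a s).encard = ((∑ k ∈ Finset.range a, Nat.choose n k : ℕ) : ℕ∞)) :
    ∀ n s, a ≤ s → (s + 1 = a + b → (Vset b a s).encard = 1) ∧
      (s + 2 + n = a + b →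
        (Vset b a s).encard = ((∑ k ∈ Finset.range (a+1), Nat.choose n k : ℕ) : ℕ∞)) := by
  have h1 : ∀ s, s + 1 = a + b → (Vset b a s).encard = 1 := by
    intro s h
    rw [Vset_succ, Vset_empty b a (s+1) (by omega), h, Nset_diag]
    simp
  intro n
  induction n with
  | zero =>
    intro s hs
    refine ⟨h1 s, fun h => ?_⟩
    rw [Vset_succ, h1 (s+1) (by omega), Nset_eq b a (s+1) (by omega) (by omega),
      Wset_empty b a (s+1) (by omega), Finset.sum_range_succ']
    simp
  | succ n ih =>
    intro s hs
    refine ⟨h1 s, fun h => ?_⟩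
    rw [Vset_succ, (ih (s+1) (by omega)).2 (by omega), Nset_eq b a (s+1) (by omega) (by omega),
      hW n (s+1) (by omega) (by omega), sum_pascal]
    push_cast
    ring

theorem Wset_card (b a : ℕ) : ∀ n s, a ≤ s → s + 2 + n = a + b →
    (Wset b a s).encard = ((∑ k ∈ Finset.range a, Nat.choose n k : ℕ) : ℕ∞) := by
  induction a with
  | zero => intro n s _ _; simp [Wset_zero]
  | succ a ih =>
    intro n s hs h
    rw [Wset_succ]
    cases n with
    | zero =>
      rw [((Vset_card b a ih) 0 s (by omega)).1 (by omega), Wset_empty b a s (by omega),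
        Finset.sum_range_succ']
      simp
    | succ n =>
      rw [((Vset_card b a ih) n s (by omega)).2 (by omega), ih n s (by omega) (by omega),
        sum_pascal]
      push_cast
      rfl

theorem Ncount_eq_sum_choose (a s b : ℕ) (has : a ≤ s) (hs : s + 2 ≤ a + b) :
    (Nset a s b).ncard = ∑ k ∈ Finset.range a, Nat.choose (a + b - 2 - s) k := by
  rw [Set.ncard_def, Nset_eq b a s has (by omega),
    Wset_card b a (a + b - 2 - s) s has (by omega), ENat.toNat_coe]
end

section
/- Let a, s, b be natural numbers with a ≤ s and s + 1 = a + b. Then N(a,s,b) = 0. -/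
theorem chain_getLast_aux (l : List (ℕ × ℕ)) : ∀ p q : ℕ × ℕ,
    (p :: l).IsChain (fun p q => q.1 < p.1 ∧ p.1 + p.2 < q.1 + q.2) →
    (p :: l).getLast? = some q → q.2 = p.2 ∨ p.2 + 2 ≤ q.2 := by
  induction l with
  | nil =>
    intro p q _ hq
    simp at hq
    subst hq
    exact Or.inl rfl
  | cons x l ih =>
    intro p q hc hq
    rw [List.isChain_cons_cons] at hc
    rw [List.getLast?_cons_cons] at hq
    have := ih x q hc.2 hq
    omega

/-- If `a ≤ s` and `s + 1 = a + b` then `N(a,s,b) = 0`. -/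
theorem Ncount_eq_zero_of_succ_eq (a s b : ℕ) (has : a ≤ s) (h : s + 1 = a + b) :
    (Nset a s b).ncard = 0 := by
  have he : Nset a s b = ∅ := by
    ext M
    simp only [Set.mem_empty_iff_false, iff_false]
    rintro ⟨⟨_, hc⟩, ⟨p, hp, h1, h2⟩, ⟨q, hq, h3⟩⟩
    cases M with
    | nil => simp at hp
    | cons x l =>
      simp at hp
      subst hp
      have := chain_getLast_aux l x q hc hq
      omega
  rw [he, Set.ncard_empty]
end

section
/- Let a, s, b be natural numbers with a ≤ s and s < a + b. Then N(a,s,b) satisfies the recurrence N(a,s,b) = Σ_{i=0}^{a−1} Σ_{j=s+1}^{i+b} N(i,j,b) (the inner sum being empty when i + b ≤ s). -/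
theorem Nset_cons (p q : ℕ × ℕ) (t : List (ℕ × ℕ)) (a s b : ℕ) :
    (p :: q :: t) ∈ Nset a s b ↔ p.1 = a ∧ p.1 + p.2 = s ∧ q.1 < a ∧ s < q.1 + q.2 ∧
      (q :: t) ∈ Nset q.1 (q.1 + q.2) b := by
  simp only [Nset, Admissible, Set.mem_setOf_eq, List.Chain', List.isChain_cons_cons,
    List.head?_cons, List.getLast?_cons_cons]
  constructor
  · rintro ⟨⟨-, ⟨h1, h2⟩, h3⟩, ⟨p', hp, rfl, rfl⟩, h5⟩
    obtain rfl := Option.some.inj hp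
    exact ⟨rfl, rfl, h1, h2, ⟨by simp, h3⟩, ⟨q, rfl, rfl, rfl⟩, h5⟩
  · rintro ⟨rfl, rfl, h1, h2, ⟨-, h3⟩, -, h5⟩
    exact ⟨⟨by simp, ⟨h1, h2⟩, h3⟩, ⟨p, rfl, rfl, rfl⟩, h5⟩

theorem Nset_single (p : ℕ × ℕ) (a s b : ℕ) :
    [p] ∈ Nset a s b ↔ p.1 = a ∧ p.1 + p.2 = s ∧ p.2 = b := by
  constructor
  · rintro ⟨-, ⟨p', hp, h1, h2⟩, ⟨q', hq, h3⟩⟩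
    obtain rfl := Option.some.inj hp
    obtain rfl := Option.some.inj hq
    exact ⟨h1, h2, h3⟩
  · rintro ⟨h1, h2, h3⟩
    exact ⟨⟨by simp, List.isChain_singleton p⟩, ⟨p, rfl, h1, h2⟩, ⟨p, rfl, h3⟩⟩

theorem Nset_nil (a s b : ℕ) : [] ∉ Nset a s b := by
  simp [Nset, Admissible]

theorem Nset_le (M : List (ℕ × ℕ)) : ∀ a s b, M ∈ Nset a s b → s ≤ a + b := by
  induction M with
  | nil => intro a s b h; exact absurd h (Nset_nil a s b)
  | cons p t ih =>
    intro a s b h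
    cases t with
    | nil => rw [Nset_single] at h; omega
    | cons q t =>
      rw [Nset_cons] at h
      obtain ⟨h1, h2, h3, h4, h5⟩ := h
      have := ih _ _ _ h5
      omega

theorem Nset_head (M : List (ℕ × ℕ)) (a s b : ℕ) (h : M ∈ Nset a s b) :
    ∃ p, M.head? = some p ∧ p.1 = a ∧ p.1 + p.2 = s := h.2.1

theorem Nset_finite (b : ℕ) : ∀ a s, (Nset a s b).Finite := by
  intro a
  induction a using Nat.strong_induction_on with
  | _ a ih =>
    intro s
    have hU : (⋃ i ∈ Set.Iio a, ⋃ j ∈ Set.Iic (i + b), Nset i j b).Finite :=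
      (Set.finite_Iio a).biUnion fun i hi =>
        (Set.finite_Iic (i + b)).biUnion fun j _ => ih i hi j
    refine ((hU.image (List.cons (a, s - a))).insert [(a, s - a)]).subset ?_
    intro M hM
    match M, hM with
    | [], hM => exact absurd hM (Nset_nil _ _ _)
    | [p], hM =>
      rw [Nset_single] at hM
      left
      have : p = (a, s - a) := Prod.ext hM.1 (by simp only; omega)
      rw [this]
    | p :: q :: t, hM =>
      rw [Nset_cons] at hM
      obtain ⟨h1, h2, h3, h4, h5⟩ := hM
      right
      have : p = (a, s - a) := Prod.ext h1 (by simp only; omega)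
      rw [this]
      refine ⟨q :: t, ?_, rfl⟩
      simp only [Set.mem_iUnion]
      exact ⟨q.1, h3, q.1 + q.2, Nset_le _ _ _ _ h5, h5⟩

/-- If `a ≤ s` and `s < a + b`, then
`N(a,s,b) = ∑_{i=0}^{a-1} ∑_{j=s+1}^{i+b} N(i,j,b)`
(the inner sum being empty when `i + b ≤ s`). -/
theorem Ncount_recurrence (a s b : ℕ) (has : a ≤ s) (h : s < a + b) :
    (Nset a s b).ncard =
      ∑ i ∈ Finset.range a, ∑ j ∈ Finset.Icc (s + 1) (i + b), (Nset i j b).ncard := by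
  classical
  have key : Nset a s b = List.cons (a, s - a) ''
      (((Finset.range a).sigma fun i => Finset.Icc (s + 1) (i + b)).biUnion
        fun x => (Nset_finite b x.1 x.2).toFinset : Finset (List (ℕ × ℕ))) := by
    ext M
    simp only [Set.mem_image, Finset.mem_coe, Finset.mem_biUnion, Finset.mem_sigma,
      Finset.mem_range, Finset.mem_Icc, Set.Finite.mem_toFinset]
    constructor
    · intro hM
      match M, hM with
      | [], hM => exact absurd hM (Nset_nil _ _ _)
      | [p], hM => rw [Nset_single] at hM; omega
      | p :: q :: t, hM =>
        rw [Nset_cons] at hM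
        obtain ⟨h1, h2, h3, h4, h5⟩ := hM
        have : p = (a, s - a) := Prod.ext h1 (by simp only; omega)
        rw [this]
        exact ⟨q :: t, ⟨⟨q.1, q.1 + q.2⟩, ⟨h3, h4, Nset_le _ _ _ _ h5⟩, h5⟩, rfl⟩
    · rintro ⟨L, ⟨⟨i, j⟩, ⟨h1, h2, h3⟩, hL⟩, rfl⟩
      obtain ⟨q, hq, rfl, rfl⟩ := Nset_head _ _ _ _ hL
      match L, hq with
      | q' :: t, hq =>
        obtain rfl := Option.some.inj hq
        rw [Nset_cons]
        exact ⟨rfl, by simp only; omega, h1, h2, hL⟩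
  rw [key, Set.ncard_image_of_injective _ (List.cons_injective), Set.ncard_coe_finset,
    Finset.card_biUnion, Finset.sum_sigma]
  · refine Finset.sum_congr rfl fun i _ => Finset.sum_congr rfl fun j _ => ?_
    exact (Set.ncard_eq_toFinset_card _ _).symm
  · rintro ⟨i, j⟩ _ ⟨i', j'⟩ _ hne
    rw [Function.onFun, Finset.disjoint_left]
    intro L hL hL'
    rw [Set.Finite.mem_toFinset] at hL hL'
    obtain ⟨q, hq, rfl, rfl⟩ := Nset_head _ _ _ _ hL
    obtain ⟨q', hq', h1, h2⟩ := Nset_head _ _ _ _ hL'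
    obtain rfl := Option.some.inj (hq.symm.trans hq')
    simp only at h1 h2
    subst h1 h2
    exact hne rfl
end

section
/- For all natural numbers a and b, G(a,b) = Σ_{i=0}^{a} Σ_{k=0}^{i−1} C(b, k+2) + a·b, where C denotes the binomial coefficient. -/
def SS (m n : ℕ) : ℕ := ∑ k ∈ Finset.range (m + 1), Nat.choose n k

lemma SS_pascal (m n : ℕ) : SS (m + 1) (n + 1) = SS m n + SS (m + 1) n := by
  unfold SS
  rw [Finset.sum_range_succ' _ (m + 1), Finset.sum_range_succ' (fun k => Nat.choose n k) (m + 1)]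
  simp only [Nat.choose_succ_succ', Finset.sum_add_distrib, Nat.choose_zero_right]
  ring

lemma SS_zero (m : ℕ) : SS m 0 = 1 := by
  unfold SS
  rw [Finset.sum_range_succ']
  simp

lemma SS_rec (m d : ℕ) :
    SS m (d - 1) + ∑ e ∈ Finset.range d, SS m (e - 1) = SS (m + 1) d := by
  induction d with
  | zero => simp [SS_zero]
  | succ d ih =>
    rw [Finset.sum_range_succ, SS_pascal, ← ih, Nat.add_sub_cancel]
    ring

lemma SS_sum (m b : ℕ) :
    ∑ e ∈ Finset.range b, SS (m + 1) e
      = (∑ k ∈ Finset.range (m + 1), Nat.choose b (k + 2)) + b := by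
  induction b with
  | zero => simp
  | succ b ih =>
    rw [Finset.sum_range_succ, ih]
    unfold SS
    rw [Finset.sum_range_succ' _ (m + 1)]
    simp only [Nat.choose_succ_succ' b (_ + 1), Finset.sum_add_distrib, Nat.choose_zero_right]
    ring

def RelG (p q : ℕ × ℕ) : Prop := q.1 < p.1 ∧ p.1 + p.2 < q.1 + q.2

instance : IsTrans (ℕ × ℕ) RelG := ⟨fun a b c h1 h2 => by unfold RelG at *; omega⟩

def TT (b : ℕ) : ℕ → ℕ → Finset (List (ℕ × ℕ))
  | 0, _ => {[]}
  | m + 1, s => TT b m s ∪ ((Finset.range (b + 1)).filter (fun u => s < m + u)).biUnion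
      (fun u => (TT b m (m + u)).image (List.cons (m, u)))

lemma mem_TT (b m s : ℕ) (l : List (ℕ × ℕ)) :
    l ∈ TT b m s ↔ l.Pairwise RelG ∧ ∀ p ∈ l, p.1 < m ∧ p.2 ≤ b ∧ s < p.1 + p.2 := by
  induction m generalizing s l with
  | zero =>
    cases l with
    | nil => simp [TT]
    | cons p l =>
      constructor
      · intro h
        simp [TT] at h
      · intro h
        have := h.2 p (by simp)
        omega
  | succ m ih =>
    simp only [TT, Finset.mem_union, Finset.mem_biUnion, Finset.mem_filter, Finset.mem_range,
      Finset.mem_image, ih]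
    constructor
    · rintro (⟨h1, h2⟩ | ⟨u, ⟨hu, hs⟩, l', ⟨h1, h2⟩, rfl⟩)
      · exact ⟨h1, fun p hp => by have := h2 p hp; omega⟩
      · refine ⟨List.pairwise_cons.2 ⟨fun q hq => ?_, h1⟩, ?_⟩
        · have := h2 q hq
          exact ⟨this.1, this.2.2⟩
        · intro p hp
          rcases List.mem_cons.1 hp with rfl | hp
          · simp only; omega
          · have := h2 p hp
            omega
    · rintro ⟨h1, h2⟩
      cases l with
      | nil => left; simp
      | cons p l =>
        have hp := h2 p (by simp)
        rw [List.pairwise_cons] at h1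
        by_cases hm : p.1 = m
        · right
          refine ⟨p.2, by omega, l, ⟨h1.2, fun q hq => ?_⟩, by rw [← hm]⟩
          have h3 := h1.1 q hq
          have h4 := h2 q (by simp [hq])
          unfold RelG at h3
          omega
        · left
          refine ⟨List.pairwise_cons.2 h1, fun q hq => ?_⟩
          have h4 := h2 q hq
          rcases List.mem_cons.1 hq with rfl | hq
          · omega
          · have h3 := h1.1 q hq
            unfold RelG at h3
            omega

lemma card_TT (b m s : ℕ) (hs : m ≤ s) : (TT b m s).card = SS m (b + m - s - 1) := by
  induction m generalizing s with
  | zero => simp [TT, SS]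
  | succ m ih =>
    rw [TT, Finset.card_union_of_disjoint, Finset.card_biUnion, ih s (by omega)]
    · have h1 : ∀ u ∈ (Finset.range (b + 1)).filter (fun u => s < m + u),
          ((TT b m (m + u)).image (List.cons (m, u))).card = SS m (b - u - 1) := by
        intro u _
        rw [Finset.card_image_of_injective _ (List.cons_injective), ih _ (by omega)]
        congr 1
        omega
      rw [Finset.sum_congr rfl h1]
      have h2 : ∑ u ∈ (Finset.range (b + 1)).filter (fun u => s < m + u), SS m (b - u - 1)
          = ∑ e ∈ Finset.range (b + m - s), SS m (e - 1) := by
        refine Finset.sum_bij' (fun u _ => b - u) (fun e _ => b - e) ?_ ?_ ?_ ?_ ?_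
        all_goals simp only [Finset.mem_filter, Finset.mem_range]
        all_goals intros
        all_goals first | trivial | omega | rfl
      rw [h2, SS_rec]
      congr 1
      omega
    · intro u _ v _ huv
      simp only [Function.onFun]
      rw [Finset.disjoint_left]
      intro l hl hl'
      simp only [Finset.mem_image] at hl hl'
      obtain ⟨l1, _, rfl⟩ := hl
      obtain ⟨l2, _, h⟩ := hl'
      simp at h
      exact huv h.1.symm
    · rw [Finset.disjoint_left]
      intro l hl hl'
      simp only [Finset.mem_biUnion, Finset.mem_image] at hl'
      obtain ⟨u, _, l', _, rfl⟩ := hl'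
      have := ((mem_TT _ _ _ _).1 hl).2 (m, u) (by simp)
      simp at this

lemma Gset_eq (a b : ℕ) : Gset a b =
    ((Finset.range a ×ˢ Finset.range b).biUnion (fun p =>
      (TT b (p.1 + 1) (p.1 + 1 + p.2)).image (List.cons (p.1 + 1, p.2))) :
        Finset (List (ℕ × ℕ))) := by
  ext l
  simp only [Finset.mem_coe, Finset.mem_biUnion, Finset.mem_product, Finset.mem_range,
    Finset.mem_image, mem_TT]
  have hc : l.IsChain (fun p q : ℕ × ℕ => q.1 < p.1 ∧ p.1 + p.2 < q.1 + q.2)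
    ↔ l.Pairwise RelG := List.isChain_iff_pairwise (R := RelG)
  constructor
  · rintro ⟨⟨h0, h1⟩, h2, ⟨p, hp, hp0⟩, h3⟩
    replace h1 := hc.1 h1
    cases l with
    | nil => exact absurd rfl h0
    | cons q l =>
      simp only [List.head?_cons, Option.some.injEq] at hp
      subst hp
      obtain ⟨x, u⟩ := q
      obtain ⟨m, rfl⟩ : ∃ m, x = m + 1 := ⟨x - 1, by simp only at hp0; omega⟩
      rw [List.pairwise_cons] at h1
      have hq := h2 (m + 1, u) (by simp)
      simp only at hq
      have hub : u < b := by
        cases l with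
        | nil => simpa using h3
        | cons r l =>
          have h4 := h1.1 r (by simp)
          have h5 := h2 r (by simp)
          simp only [RelG] at h4
          omega
      refine ⟨(m, u), ⟨by simp only; omega, hub⟩, l, ⟨h1.2, fun r hr => ?_⟩, rfl⟩
      have h4 := h1.1 r hr
      have h5 := h2 r (by simp [hr])
      simp only [RelG] at h4
      simp only
      omega
  · rintro ⟨⟨m, u⟩, ⟨hm, hu⟩, l', ⟨h1, h2⟩, rfl⟩
    simp only at hm hu h2
    refine ⟨⟨by simp, hc.2 (List.pairwise_cons.2 ⟨fun q hq => ?_, h1⟩)⟩, ?_, ?_, ?_⟩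
    · have := h2 q hq
      exact ⟨this.1, this.2.2⟩
    · intro p hp
      rcases List.mem_cons.1 hp with rfl | hp
      · simp only; omega
      · have := h2 p hp
        omega
    · exact ⟨_, rfl, by simp⟩
    · exact fun _ => ⟨_, rfl, hu⟩

/-- `G(a,b) = ∑_{i=0}^{a} ∑_{k=0}^{i-1} C(b, k+2) + a·b`. -/
theorem Gcount_eq (a b : ℕ) :
    (Gset a b).ncard =
      (∑ i ∈ Finset.range (a + 1), ∑ k ∈ Finset.range i, Nat.choose b (k + 2)) + a * b := by
  rw [Gset_eq, Set.ncard_coe_finset, Finset.card_biUnion]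
  · have h1 : ∀ p ∈ Finset.range a ×ˢ Finset.range b,
        ((TT b (p.1 + 1) (p.1 + 1 + p.2)).image (List.cons (p.1 + 1, p.2))).card
          = SS (p.1 + 1) (b - 1 - p.2) := by
      intro p _
      rw [Finset.card_image_of_injective _ (List.cons_injective), card_TT _ _ _ (by omega)]
      congr 1
      omega
    rw [Finset.sum_congr rfl h1, Finset.sum_product]
    have h2 : ∀ m ∈ Finset.range a, ∑ u ∈ Finset.range b, SS (m + 1) (b - 1 - u)
        = (∑ k ∈ Finset.range (m + 1), Nat.choose b (k + 2)) + b := by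
      intro m _
      rw [Finset.sum_range_reflect (fun e => SS (m + 1) e), SS_sum]
    rw [Finset.sum_congr rfl h2, Finset.sum_add_distrib, Finset.sum_range_succ']
    simp
  · intro p _ q _ hpq
    simp only [Function.onFun]
    rw [Finset.disjoint_left]
    intro l hl hl'
    simp only [Finset.mem_image] at hl hl'
    obtain ⟨l1, _, rfl⟩ := hl
    obtain ⟨l2, _, h⟩ := hl'
    simp at h
    exact hpq (Prod.ext h.1.1.symm h.1.2.symm)
end

section
/- For all natural numbers a and b, the number of admissible lists M = [(m_1,μ_1),…,(m_r,μ_r)] with m_1 ≤ a and μ_r ≤ b equals Σ_{i=0}^{a} Σ_{k=0}^{i−1} C(b, k+2) + (a+1)(b+1). -/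
/-- Partial row sums of Pascal's triangle. -/
def pRow (N k : ℕ) : ℕ := ∑ i ∈ Finset.range (k + 1), Nat.choose N i

theorem pRow_zero_left (k : ℕ) : pRow 0 k = 1 := by
  unfold pRow
  rw [Finset.sum_range_succ']
  simp

theorem pRow_zero_right (N : ℕ) : pRow N 0 = 1 := by
  simp [pRow]

theorem pRow_succ (N k : ℕ) : pRow (N + 1) (k + 1) = pRow N (k + 1) + pRow N k := by
  unfold pRow
  rw [Finset.sum_range_succ' _ (k + 1), Finset.sum_range_succ' (fun i => Nat.choose N i) (k + 1)]
  simp only [Nat.choose_succ_succ, Finset.sum_add_distrib, Nat.choose_zero_right]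
  simp only [Nat.succ_eq_add_one]
  omega

theorem hockey (k n : ℕ) : ∑ t ∈ Finset.range (n + 1), pRow (t - 1) k = pRow n (k + 1) := by
  induction n with
  | zero => simp [pRow_zero_left]
  | succ n ih =>
    rw [Finset.sum_range_succ, ih, pRow_succ]
    simp

theorem hockey_filter (b e k : ℕ) :
    ∑ u ∈ (Finset.range (b + 1)).filter (fun u => e < u), pRow (b - (u + 1)) k =
      if e < b then pRow (b - (e + 1)) (k + 1) else 0 := by
  split_ifs with h
  · rw [← hockey]
    refine Finset.sum_nbij' (fun u => b - u) (fun t => b - t) ?_ ?_ ?_ ?_ ?_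
    · intro u hu; simp at hu ⊢; omega
    · intro u hu; simp at hu ⊢; omega
    · intro u hu; simp at hu ⊢; omega
    · intro u hu; simp at hu ⊢; omega
    · intro u hu; simp at hu ⊢
      congr 1
  · apply Finset.sum_eq_zero
    intro u hu; simp at hu; omega

theorem pRow_expand (m N : ℕ) :
    pRow N m = 1 + ∑ d ∈ Finset.range m, if d < N then pRow (N - (d + 1)) (m - d) else 0 := by
  induction m generalizing N with
  | zero => simp [pRow_zero_right]
  | succ m ih =>
    cases N with
    | zero => simp [pRow_zero_left]
    | succ N =>
      rw [pRow_succ, Finset.sum_range_succ', ih N]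
      simp
      omega

/-- number of lists with given head -/
def cnt (b : ℕ) (p : ℕ × ℕ) : ℕ := if p.2 ≤ b then pRow (b - (p.2 + 1)) p.1 else 0

theorem cnt_rec (b m u : ℕ) (hu : u ≤ b) :
    cnt b (m, u) = 1 + ∑ q ∈ (Finset.range m ×ˢ Finset.range (b + 1)).filter
      (fun q => m + u < q.1 + q.2), cnt b q := by
  have h1 : ∑ q ∈ (Finset.range m ×ˢ Finset.range (b + 1)).filter
      (fun q => m + u < q.1 + q.2), cnt b q =
      ∑ x ∈ Finset.range m, if (m + u - x) < b then pRow (b - (m + u - x + 1)) (x + 1) else 0 := by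
    rw [Finset.sum_filter, Finset.sum_product]
    apply Finset.sum_congr rfl
    intro x hx
    rw [← hockey_filter, Finset.sum_filter]
    apply Finset.sum_congr rfl
    intro y hy
    simp at hx hy
    have : (m + u < x + y) ↔ (m + u - x < y) := by omega
    simp only [this, cnt]
    rw [if_pos (show y ≤ b by omega)]
  rw [h1, ← Finset.sum_range_reflect]
  simp only [cnt, if_pos hu]
  rw [pRow_expand]
  congr 1
  apply Finset.sum_congr rfl
  intro d hd
  simp at hd
  have e1 : (m + u - (m - 1 - d) < b) ↔ d < b - (u + 1) := by omega
  have e2 : b - (u + 1) - (d + 1) = b - (m + u - (m - 1 - d) + 1) := by omega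
  have e3 : m - d = m - 1 - d + 1 := by omega
  simp only [e1, e2, e3]

/-- lists with given head -/
def HeadSpec (b : ℕ) (p : ℕ × ℕ) (M : List (ℕ × ℕ)) : Prop :=
  Admissible M ∧ M.head? = some p ∧ (∃ q, M.getLast? = some q ∧ q.2 ≤ b)

theorem last_bound (b : ℕ) (M : List (ℕ × ℕ)) (p : ℕ × ℕ) (h : HeadSpec b p M) : p.2 ≤ b := by
  induction M generalizing p with
  | nil => simp [HeadSpec] at h
  | cons x M ih =>
    obtain ⟨⟨_, hc⟩, hh, q, hq, hqb⟩ := h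
    simp at hh
    subst hh
    cases M with
    | nil => simp at hq; subst hq; exact hqb
    | cons y M =>
      have hc' := List.isChain_cons_cons.1 hc
      have := ih y ⟨⟨by simp, hc'.2⟩, by simp, q, by simpa using hq, hqb⟩
      omega

theorem headSpec_cons (b : ℕ) (p : ℕ × ℕ) (M : List (ℕ × ℕ)) :
    HeadSpec b p M ↔ (p.2 ≤ b ∧ M = [p]) ∨
      ∃ q, (q.1 < p.1 ∧ p.1 + p.2 < q.1 + q.2) ∧ ∃ N, HeadSpec b q N ∧ p :: N = M := by
  constructor
  · rintro ⟨⟨hne, hc⟩, hh, l, hl, hlb⟩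
    match M, hne, hc, hh, hl with
    | [x], _, _, hh, hl =>
      simp at hh hl; subst hh; subst hl
      exact Or.inl ⟨hlb, rfl⟩
    | x :: y :: M, _, hc, hh, hl =>
      simp at hh; subst hh
      have hc' := List.isChain_cons_cons.1 hc
      exact Or.inr ⟨y, hc'.1, y :: M, ⟨⟨by simp, hc'.2⟩, by simp, l, by simpa using hl, hlb⟩, rfl⟩
  · rintro (⟨h, rfl⟩ | ⟨q, hq, N, ⟨⟨hne, hc⟩, hh, l, hl, hlb⟩, rfl⟩)
    · exact ⟨⟨by simp, List.isChain_singleton _⟩, by simp, p, by simp, h⟩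
    · match N, hne, hc, hh, hl with
      | x :: N, _, hc, hh, hl =>
        simp at hh; subst hh
        exact ⟨⟨by simp, List.isChain_cons_cons.2 ⟨hq, hc⟩⟩, by simp, l, by simpa using hl, hlb⟩

theorem exists_finset (b m : ℕ) : ∀ u, ∃ T : Finset (List (ℕ × ℕ)),
    (∀ M, M ∈ T ↔ HeadSpec b (m, u) M) ∧ T.card = cnt b (m, u) := by
  classical
  induction m using Nat.strong_induction_on with
  | _ m ih =>
  intro u
  have ih' : ∀ q : ℕ × ℕ, ∃ T : Finset (List (ℕ × ℕ)), q.1 < m →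
      (∀ M, M ∈ T ↔ HeadSpec b q M) ∧ T.card = cnt b q := by
    intro q
    by_cases h : q.1 < m
    · obtain ⟨T, hT⟩ := ih q.1 h q.2
      exact ⟨T, fun _ => hT⟩
    · exact ⟨∅, fun h' => absurd h' h⟩
  choose T hT using ih'
  by_cases hu : u ≤ b
  swap
  · refine ⟨∅, ?_, by simp [cnt, hu]⟩
    intro M
    simp only [Finset.notMem_empty, false_iff]
    intro h
    exact hu (last_bound b M _ h)
  let I := (Finset.range m ×ˢ Finset.range (b + 1)).filter (fun q => m + u < q.1 + q.2)
  have hI : ∀ q ∈ I, q.1 < m := by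
    intro q hq; simp [I] at hq; omega
  refine ⟨insert [(m, u)] ((I.biUnion T).image (fun N => (m, u) :: N)), ?_, ?_⟩
  · intro M
    rw [headSpec_cons]
    simp only [Finset.mem_insert, Finset.mem_image, Finset.mem_biUnion]
    constructor
    · rintro (h | ⟨N, ⟨q, hq, hN⟩, h⟩)
      · exact Or.inl ⟨hu, h⟩
      · refine Or.inr ⟨q, ?_, N, ((hT q (hI q hq)).1 N).1 hN, h⟩
        simp [I] at hq
        exact ⟨hq.1.1, hq.2⟩
    · rintro (h | ⟨q, hq, N, hN, h⟩)
      · exact Or.inl h.2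
      · refine Or.inr ⟨N, ⟨q, ?_, ((hT q hq.1).1 N).2 hN⟩, h⟩
        have := last_bound b N _ hN
        simp [I]
        exact ⟨⟨hq.1, by omega⟩, hq.2⟩
  · rw [Finset.card_insert_of_notMem, Finset.card_image_of_injective, Finset.card_biUnion,
      cnt_rec b m u hu, add_comm]
    · congr 1
      exact Finset.sum_congr rfl fun q hq => (hT q (hI q hq)).2
    · intro q hq q' hq' hne
      show Disjoint (T q) (T q')
      rw [Finset.disjoint_left]
      intro N hN hN'
      have h1 := (((hT q (hI q hq)).1 N).1 hN).2.1
      have h2 := (((hT q' (hI q' hq')).1 N).1 hN').2.1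
      rw [h1] at h2
      exact hne (Option.some.inj h2)
    · intro x y h
      simpa using h
    · simp only [Finset.mem_image, Finset.mem_biUnion, not_exists, not_and]
      rintro N ⟨q, hq, hN⟩ h
      have h1 := (((hT q (hI q hq)).1 N).1 hN).1.1
      simp at h
      exact h1 h

/-- The number of admissible lists with bounded head and last entry. -/
theorem count_admissible_head_last_le (a b : ℕ) :
    {M : List (ℕ × ℕ) | Admissible M ∧
        (∃ p, M.head? = some p ∧ p.1 ≤ a) ∧
        (∃ q, M.getLast? = some q ∧ q.2 ≤ b)}.ncard =
      (∑ i ∈ Finset.range (a + 1), ∑ k ∈ Finset.range i, Nat.choose b (k + 2)) +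
        (a + 1) * (b + 1) := by
  classical
  choose T hT using fun q : ℕ × ℕ => exists_finset b q.1 q.2
  have hS : {M : List (ℕ × ℕ) | Admissible M ∧
        (∃ p, M.head? = some p ∧ p.1 ≤ a) ∧
        (∃ q, M.getLast? = some q ∧ q.2 ≤ b)} =
      (((Finset.range (a + 1) ×ˢ Finset.range (b + 1)).biUnion T : Finset _) : Set _) := by
    ext M
    simp only [Set.mem_ofPred_eq, Finset.mem_coe, Finset.mem_biUnion, (hT _).1]
    constructor
    · rintro ⟨h, ⟨p, hp, hpa⟩, hl⟩
      have hs : HeadSpec b p M := ⟨h, hp, hl⟩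
      have := last_bound b M p hs
      refine ⟨p, ?_, hs⟩
      simp
      omega
    · rintro ⟨p, hp, h, hh, hl⟩
      refine ⟨h, ⟨p, hh, ?_⟩, hl⟩
      simp at hp
      omega
  rw [hS, Set.ncard_coe_finset, Finset.card_biUnion]
  · rw [Finset.sum_congr rfl fun q _ => (hT q).2, Finset.sum_product]
    have : ∀ m, ∑ y ∈ Finset.range (b + 1), cnt b (m, y) =
        ∑ k ∈ Finset.range m, Nat.choose b (k + 2) + (b + 1) := by
      intro m
      have h1 : pRow b (m + 1) = ∑ k ∈ Finset.range m, Nat.choose b (k + 2) + (b + 1) := by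
        unfold pRow
        rw [Finset.sum_range_succ', Finset.sum_range_succ']
        simp [add_assoc, add_comm b 1]
      rw [← h1, ← hockey, ← Finset.sum_range_reflect]
      apply Finset.sum_congr rfl
      intro y hy
      simp at hy
      simp only [cnt]
      rw [if_pos (by omega)]
      congr 1
      omega
    simp only [this, Finset.sum_add_distrib]
    simp
    ring
  · intro q hq q' hq' hne
    show Disjoint (T q) (T q')
    rw [Finset.disjoint_left]
    intro N hN hN'
    have h1 := (((hT q).1 N).1 hN).2.1
    have h2 := (((hT q').1 N).1 hN').2.1
    rw [h1] at h2
    exact hne (Option.some.inj h2)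
end

section
/- For every natural number n, Σ_{a=0}^{n} Σ_{i=0}^{a} Σ_{k=0}^{i−1} C(n−a, k+2) = Σ_{k=0}^{n−1} C(n+1−k, k+4), where C denotes the binomial coefficient. -/
theorem aux_step (f : ℕ → ℕ) (m : ℕ) :
    ∑ j ∈ Finset.range (m + 1), (m + 1 - j) * f j =
      ∑ j ∈ Finset.range m, (m - j) * f j + ∑ j ∈ Finset.range (m + 1), f j := by
  have h : ∑ j ∈ Finset.range m, (m - j) * f j
      = ∑ j ∈ Finset.range (m + 1), (m - j) * f j := by
    rw [Finset.sum_range_succ]; simp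
  rw [h, ← Finset.sum_add_distrib]
  refine Finset.sum_congr rfl fun j hj => ?_
  have hj' := Finset.mem_range.1 hj
  rw [show m + 1 - j = (m - j) + 1 by omega]; ring

theorem aux_extend (f : ℕ → ℕ) (m N : ℕ) (h : m ≤ N) :
    ∑ j ∈ Finset.range m, (m - j) * f j = ∑ j ∈ Finset.range N, (m - j) * f j := by
  refine Finset.sum_subset (Finset.range_mono h) fun j _ hj => ?_
  have hj' : m ≤ j := by simpa using hj
  simp [Nat.sub_eq_zero_of_le hj']

theorem aux_double (f : ℕ → ℕ) (a : ℕ) :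
    ∑ i ∈ Finset.range (a + 1), ∑ k ∈ Finset.range i, f k =
      ∑ k ∈ Finset.range a, (a - k) * f k := by
  induction a with
  | zero => simp
  | succ a ih => rw [Finset.sum_range_succ, ih, aux_step]

theorem aux_hockey (r m : ℕ) :
    ∑ j ∈ Finset.range m, Nat.choose j r = Nat.choose m (r + 1) := by
  induction m with
  | zero => simp
  | succ m ih => rw [Finset.sum_range_succ, ih, Nat.choose_succ_succ' m r, add_comm]

theorem aux_conv (r m : ℕ) :
    ∑ j ∈ Finset.range m, (m - j) * Nat.choose j r = Nat.choose (m + 1) (r + 2) := by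
  induction m with
  | zero => simp [Nat.choose_eq_zero_of_lt]
  | succ m ih =>
    rw [aux_step, ih, aux_hockey, Nat.choose_succ_succ' (m + 1) (r + 1), add_comm]

/-- `∑_{a=0}^{n} ∑_{i=0}^{a} ∑_{k=0}^{i-1} C(n-a, k+2)
      = ∑_{k=0}^{n-1} C(n+1-k, k+4)`. -/
theorem triple_sum_choose_eq (n : ℕ) :
    ∑ a ∈ Finset.range (n + 1), ∑ i ∈ Finset.range (a + 1),
        ∑ k ∈ Finset.range i, Nat.choose (n - a) (k + 2) =
      ∑ k ∈ Finset.range n, Nat.choose (n + 1 - k) (k + 4) := by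
  have h1 : ∀ a ∈ Finset.range (n + 1), ∑ i ∈ Finset.range (a + 1),
      ∑ k ∈ Finset.range i, Nat.choose (n - a) (k + 2) =
      ∑ k ∈ Finset.range n, (a - k) * Nat.choose (n - a) (k + 2) := by
    intro a ha
    have ha' := Finset.mem_range.1 ha
    rw [aux_double (fun k => Nat.choose (n - a) (k + 2)) a]
    exact aux_extend (fun k => Nat.choose (n - a) (k + 2)) a n (by omega)
  rw [Finset.sum_congr rfl h1, Finset.sum_comm]
  refine Finset.sum_congr rfl fun k hk => ?_
  have hk' := Finset.mem_range.1 hk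
  rw [show n + 1 - k = (n - k) + 1 by omega, ← aux_conv (k + 2) (n - k),
    aux_extend (fun j => Nat.choose j (k + 2)) (n - k) (n + 1) (by omega),
    ← Finset.sum_range_reflect]
  refine Finset.sum_congr rfl fun j hj => ?_
  have hj' := Finset.mem_range.1 hj
  rw [show n + 1 - 1 - j - k = n - k - j by omega, show n - (n + 1 - 1 - j) = j by omega]
end

section
/- For every natural number n, Σ_{k=0}^{n−1} C(n+1−k, k+4) + C(n+1, 3) = F(n+6) − (n² + 4n + 8), where C denotes the binomial coefficient. -/
/-- `∑_{k=0}^{n-1} C(n+1-k, k+4) + C(n+1, 3) = F(n+6) - (n² + 4n + 8)`. -/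
theorem sum_choose_add_choose_eq_fib (n : ℕ) :
    (∑ k ∈ Finset.range n, Nat.choose (n + 1 - k) (k + 4)) + Nat.choose (n + 1) 3 =
      Nat.fib (n + 6) - (n ^ 2 + 4 * n + 8) := by
  have h := Nat.fib_succ_eq_sum_choose (n + 5)
  rw [← Finset.Nat.sum_antidiagonal_swap] at h
  simp only [Prod.fst_swap, Prod.snd_swap] at h
  rw [Finset.Nat.sum_antidiagonal_eq_sum_range_succ (fun a b => Nat.choose b a)] at h
  change Nat.fib (n + 6) = ∑ k ∈ Finset.range (n + 1 + 1 + 1 + 1 + 1 + 1), _ at h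
  rw [Finset.sum_range_succ', Finset.sum_range_succ', Finset.sum_range_succ',
    Finset.sum_range_succ', Finset.sum_range_succ, Finset.sum_range_succ] at h
  have e : ∀ k, n + 5 - (k + 1 + 1 + 1 + 1) = n + 1 - k := fun k => by omega
  have e4 : (n + 1 - n).choose (n + 1 + 1 + 1 + 1) = 0 := Nat.choose_eq_zero_of_lt (by omega)
  have e5 : (n + 1 - (n + 1)).choose (n + 1 + 1 + 1 + 1 + 1) = 0 :=
    Nat.choose_eq_zero_of_lt (by omega)
  simp only [e, e4, e5] at h
  have e1 : n + 5 - (0 + 1 + 1 + 1) = n + 2 := by omega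
  have e2 : n + 5 - (0 + 1 + 1) = n + 3 := by omega
  have e3 : n + 5 - (0 + 1) = n + 4 := by omega
  rw [e1, e2, e3] at h
  have c3 : (n + 2).choose 3 = (n + 1).choose 2 + (n + 1).choose 3 := Nat.choose_succ_succ' _ _
  have c2 : (n + 3).choose 2 = (n + 2) + ((n + 1) + (n + 1).choose 2) := by
    rw [Nat.choose_succ_succ' (n + 2) 1, Nat.choose_succ_succ' (n + 1) 1]; simp
  have c1 : 2 * (n + 1).choose 2 = n ^ 2 + n := by
    have := Nat.triangle_succ n
    rw [Nat.choose_two_right, Nat.mul_div_cancel' (Nat.even_mul_pred_self _).two_dvd]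
    simp; ring
  simp only [zero_add, Nat.choose_one_right, Nat.choose_zero_right, add_zero, Nat.reduceAdd,
    add_assoc] at h
  omega
end

section
/- Let (N, W) be a complete simple game with exactly two types, with classes N₁ ≻ N₂ of cardinalities n₁ = |N₁| and n₂ = |N₂|, and let P be its set of δ-minimal winning profiles. Then: (i) P is nonempty and every (p₁,p₂) ∈ P satisfies p₁ ≤ n₁ and p₂ ≤ n₂; (ii) if P is a singleton {(m₁,m₂)}, then m₁ > 0 and m₂ < n₂; (iii) any two distinct profiles (p₁,p₂) ≠ (q₁,q₂) in P satisfy p₁ ≠ q₁, and p₁ > q₁ if and only if p₁ + p₂ < q₁ + q₂ (so that, listed in strictly decreasing order of first coordinate, the rows of P have strictly increasing sums). -/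
/-- A simple game on `Fin n`: the grand coalition wins, the empty coalition
loses, and winning coalitions are closed under supersets. -/
def IsSimpleGame {n : ℕ} (W : Set (Finset (Fin n))) : Prop :=
  Finset.univ ∈ W ∧ ∅ ∉ W ∧ ∀ S ∈ W, ∀ T, S ⊆ T → T ∈ W

/-- Player `i` is at least as desirable as player `j`. -/
def MoreDesirable {n : ℕ} (W : Set (Finset (Fin n))) (i j : Fin n) : Prop :=
  ∀ S : Finset (Fin n), i ∉ S → j ∉ S → insert j S ∈ W → insert i S ∈ W

/-- Players `i` and `j` are equally desirable. -/
def EquallyDesirable {n : ℕ} (W : Set (Finset (Fin n))) (i j : Fin n) : Prop :=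
  MoreDesirable W i j ∧ MoreDesirable W j i

/-- Player `i` is strictly more desirable than player `j`. -/
def StrictlyMoreDesirable {n : ℕ} (W : Set (Finset (Fin n))) (i j : Fin n) : Prop :=
  MoreDesirable W i j ∧ ¬ MoreDesirable W j i

/-- The game is complete: the desirability preordering is total. -/
def IsCompleteGame {n : ℕ} (W : Set (Finset (Fin n))) : Prop :=
  ∀ i j : Fin n, MoreDesirable W i j ∨ MoreDesirable W j i

/-- The game has exactly two types of players, with classes `N₁ ≻ N₂`:
both classes are nonempty, they partition the player set, players within a
class are equally desirable, and every player of `N₁` is strictly more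
desirable than every player of `N₂`. -/
def TwoTypes {n : ℕ} (W : Set (Finset (Fin n))) (N₁ N₂ : Finset (Fin n)) : Prop :=
  N₁.Nonempty ∧ N₂.Nonempty ∧ Disjoint N₁ N₂ ∧ N₁ ∪ N₂ = Finset.univ ∧
  (∀ i ∈ N₁, ∀ j ∈ N₁, EquallyDesirable W i j) ∧
  (∀ i ∈ N₂, ∀ j ∈ N₂, EquallyDesirable W i j) ∧
  (∀ i ∈ N₁, ∀ j ∈ N₂, StrictlyMoreDesirable W i j)

/-- A profile `(p₁, p₂)` is winning if some winning coalition intersects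
`N₁` in `p₁` players and `N₂` in `p₂` players. -/
def WinningProfile {n : ℕ} (W : Set (Finset (Fin n))) (N₁ N₂ : Finset (Fin n))
    (p : ℕ × ℕ) : Prop :=
  ∃ S ∈ W, (S ∩ N₁).card = p.1 ∧ (S ∩ N₂).card = p.2

/-- The set of δ-minimal winning profiles: winning profiles `m` such that
no winning profile `q ≠ m` is δ-dominated by `m`, where `m` δ-dominates `q`
iff `q₁ ≤ m₁` and `q₁ + q₂ ≤ m₁ + m₂`. -/
def DeltaMinProfiles {n : ℕ} (W : Set (Finset (Fin n))) (N₁ N₂ : Finset (Fin n)) :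
    Set (ℕ × ℕ) :=
  {m | WinningProfile W N₁ N₂ m ∧
       ∀ q, WinningProfile W N₁ N₂ q → q.1 ≤ m.1 → q.1 + q.2 ≤ m.1 + m.2 → q = m}

theorem aux_shift {n : ℕ} (W : Set (Finset (Fin n))) (N₁ N₂ : Finset (Fin n))
    (hW : IsSimpleGame W) (h2 : TwoTypes W N₁ N₂) (S : Finset (Fin n)) :
    ∀ k : ℕ, ∀ T : Finset (Fin n), (T \ S).card = k → T ∈ W →
      (T ∩ N₁).card ≤ (S ∩ N₁).card → T.card ≤ S.card → S ∈ W := by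
  obtain ⟨-, -, hmono⟩ := hW
  obtain ⟨-, -, hd, hu, h11, h22, h12⟩ := h2
  have hcov : ∀ x, x ∈ N₁ ∨ x ∈ N₂ := fun x => by
    have : x ∈ N₁ ∪ N₂ := hu ▸ Finset.mem_univ x
    simpa using this
  intro k
  induction k with
  | zero =>
    intro T hk hT _ _
    rw [Finset.card_eq_zero, Finset.sdiff_eq_empty_iff_subset] at hk
    exact hmono T hT S hk
  | succ k ih =>
    intro T hk hT h1 hcard
    have key : ∃ x y, x ∈ T ∧ x ∉ S ∧ y ∈ S ∧ y ∉ T ∧ MoreDesirable W y x ∧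
        (insert y (T.erase x) ∩ N₁).card ≤ (S ∩ N₁).card := by
      by_cases hx : ∃ x ∈ T, x ∉ S ∧ x ∈ N₁
      · obtain ⟨x, hxT, hxS, hxN⟩ := hx
        have : ∃ y ∈ S ∩ N₁, y ∉ T ∩ N₁ := by
          by_contra hcon
          push Not at hcon
          have he := Finset.eq_of_subset_of_card_le (s := S ∩ N₁) (t := T ∩ N₁) hcon h1
          have : x ∈ S ∩ N₁ := by rw [he]; simp [hxT, hxN]
          simp [hxS] at this
        obtain ⟨y, hy, hyT⟩ := this
        have hyS : y ∈ S := (Finset.mem_inter.1 hy).1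
        have hyN : y ∈ N₁ := (Finset.mem_inter.1 hy).2
        have hyT' : y ∉ T := fun h => hyT (Finset.mem_inter.2 ⟨h, hyN⟩)
        refine ⟨x, y, hxT, hxS, hyS, hyT', (h11 y hyN x hxN).1, ?_⟩
        have he : insert y (T.erase x) ∩ N₁ = insert y ((T ∩ N₁).erase x) := by
          ext z; simp only [Finset.mem_inter, Finset.mem_insert, Finset.mem_erase]; clear ih hmono h11 h22 h12 hk h1 hcard hu hd hcov; grind
        rw [he]
        have := Finset.card_insert_le y ((T ∩ N₁).erase x)
        have := Finset.card_erase_add_one (Finset.mem_inter.2 ⟨hxT, hxN⟩)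
        omega
      · push Not at hx
        have : (T \ S).Nonempty := by rw [← Finset.card_pos]; omega
        obtain ⟨x, hx'⟩ := this
        obtain ⟨hxT, hxS⟩ := Finset.mem_sdiff.1 hx'
        have hxN := hx x hxT hxS
        have hxN2 := (hcov x).resolve_left hxN
        have : ∃ y ∈ S, y ∉ T := by
          by_contra hcon
          push Not at hcon
          have he := Finset.eq_of_subset_of_card_le (s := S) (t := T) hcon hcard
          exact hxS (he ▸ hxT)
        obtain ⟨y, hyS, hyT⟩ := this
        refine ⟨x, y, hxT, hxS, hyS, hyT, ?_, ?_⟩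
        · rcases hcov y with h | h
          · exact (h12 y h x hxN2).1
          · exact (h22 y h x hxN2).1
        · apply Finset.card_le_card
          intro z
          simp only [Finset.mem_inter, Finset.mem_insert, Finset.mem_erase]
          clear ih hmono h11 h22 h12 hk h1 hcard hu hd hcov
          grind
    obtain ⟨x, y, hxT, hxS, hyS, hyT, hyx, hle⟩ := key
    refine ih (insert y (T.erase x)) ?_ ?_ hle ?_
    · have he : insert y (T.erase x) \ S = (T \ S).erase x := by
        ext z; simp only [Finset.mem_sdiff, Finset.mem_insert, Finset.mem_erase]; clear ih hmono h11 h22 h12 hk h1 hcard hu hd hcov; grind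
      rw [he, Finset.card_erase_of_mem (Finset.mem_sdiff.2 ⟨hxT, hxS⟩), hk]; rfl
    · apply hyx
      · simp [hyT]
      · simp [hyT]
      · rwa [Finset.insert_erase hxT]
    · have := Finset.card_insert_le y (T.erase x)
      have := Finset.card_erase_add_one hxT
      omega

theorem aux_below {n : ℕ} (W : Set (Finset (Fin n))) (N₁ N₂ : Finset (Fin n)) :
    ∀ k : ℕ, ∀ q : ℕ × ℕ, q.1 + (q.1 + q.2) = k → WinningProfile W N₁ N₂ q →
      ∃ m ∈ DeltaMinProfiles W N₁ N₂, m.1 ≤ q.1 ∧ m.1 + m.2 ≤ q.1 + q.2 := by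
  intro k
  induction k using Nat.strong_induction_on with
  | _ k ih =>
    intro q hk hq
    by_cases hm : q ∈ DeltaMinProfiles W N₁ N₂
    · exact ⟨q, hm, le_rfl, le_rfl⟩
    · have : ∃ r, WinningProfile W N₁ N₂ r ∧ r.1 ≤ q.1 ∧ r.1 + r.2 ≤ q.1 + q.2 ∧ r ≠ q := by
        by_contra hcon
        push Not at hcon
        exact hm ⟨hq, hcon⟩
      obtain ⟨r, hr, h1, h2, hne⟩ := this
      have hlt : r.1 + (r.1 + r.2) < k := by
        by_contra hge
        exact hne (Prod.ext (by omega) (by omega))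
      obtain ⟨m, hmm, h3, h4⟩ := ih _ hlt r rfl hr
      exact ⟨m, hmm, by omega, by omega⟩

/-- Part A of the Carreras–Freixas parametrization theorem for two types:
the δ-minimal winning profiles of a complete simple game with exactly two
types satisfy the defining conditions of an admissible matrix. -/
theorem deltaMinProfiles_conditions {n : ℕ} (hn : 1 ≤ n)
    (W : Set (Finset (Fin n))) (N₁ N₂ : Finset (Fin n))
    (hW : IsSimpleGame W) (hc : IsCompleteGame W) (h2 : TwoTypes W N₁ N₂) :
    (DeltaMinProfiles W N₁ N₂).Nonempty ∧
    (∀ p ∈ DeltaMinProfiles W N₁ N₂, p.1 ≤ N₁.card ∧ p.2 ≤ N₂.card) ∧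
    (∀ m, DeltaMinProfiles W N₁ N₂ = {m} → 0 < m.1 ∧ m.2 < N₂.card) ∧
    (∀ p ∈ DeltaMinProfiles W N₁ N₂, ∀ q ∈ DeltaMinProfiles W N₁ N₂, p ≠ q →
      p.1 ≠ q.1 ∧ (q.1 < p.1 ↔ p.1 + p.2 < q.1 + q.2)) := by
  have hsplit : ∀ S : Finset (Fin n), S.card = (S ∩ N₁).card + (S ∩ N₂).card := by
    intro S
    rw [← Finset.card_union_of_disjoint, ← Finset.inter_union_distrib_left, h2.2.2.2.1,
      Finset.inter_univ]
    exact h2.2.2.1.mono Finset.inter_subset_right Finset.inter_subset_right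
  have hbd : ∀ p ∈ DeltaMinProfiles W N₁ N₂, p.1 ≤ N₁.card ∧ p.2 ≤ N₂.card := by
    rintro p ⟨⟨S, -, h1, h2⟩, -⟩
    rw [← h1, ← h2]
    exact ⟨Finset.card_le_card Finset.inter_subset_right,
      Finset.card_le_card Finset.inter_subset_right⟩
  refine ⟨?_, hbd, ?_, ?_⟩
  · obtain ⟨m, hm, -⟩ := aux_below W N₁ N₂ _ ((Finset.univ ∩ N₁).card, (Finset.univ ∩ N₂).card)
      rfl ⟨Finset.univ, hW.1, rfl, rfl⟩
    exact ⟨m, hm⟩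
  · intro m hm
    have hmP : m ∈ DeltaMinProfiles W N₁ N₂ := by rw [hm]; rfl
    obtain ⟨⟨T, hT, hT1, hT2⟩, -⟩ := id hmP
    have hm2 := (hbd m hmP).2
    obtain ⟨i, hi⟩ := h2.1
    obtain ⟨j, hj⟩ := h2.2.1
    have hdis := Finset.disjoint_left.1 h2.2.2.1
    have hnot := (h2.2.2.2.2.2.2 i hi j hj).2
    unfold MoreDesirable at hnot
    push Not at hnot
    obtain ⟨S, hjS, hiS, hwin, hlose⟩ := hnot
    have hj1 : j ∉ N₁ := fun h => hdis h hj
    have hi2 : i ∉ N₂ := hdis hi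
    have e1 : (insert i S ∩ N₁).card = (S ∩ N₁).card + 1 := by
      rw [Finset.insert_inter_of_mem hi, Finset.card_insert_of_notMem (by simp [hiS])]
    have e2 : (insert i S ∩ N₂).card = (S ∩ N₂).card := by
      rw [Finset.insert_inter_of_notMem hi2]
    have e3 : (insert j S ∩ N₁).card = (S ∩ N₁).card := by
      rw [Finset.insert_inter_of_notMem hj1]
    have e4 : (insert j S ∩ N₂).card = (S ∩ N₂).card + 1 := by
      rw [Finset.insert_inter_of_mem hj, Finset.card_insert_of_notMem (by simp [hjS])]
    have e5 : (insert j S ∩ N₂).card ≤ N₂.card := Finset.card_le_card Finset.inter_subset_right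
    obtain ⟨m', hm', g1, g2⟩ := aux_below W N₁ N₂ _
      ((insert i S ∩ N₁).card, (insert i S ∩ N₂).card) rfl ⟨_, hwin, rfl, rfl⟩
    rw [hm, Set.mem_singleton_iff] at hm'
    subst hm'
    simp only at g1 g2
    have s1 := hsplit T
    have s2 := hsplit (insert j S)
    have hcon : ¬ m'.1 ≤ (S ∩ N₁).card := by
      intro hle
      exact hlose (aux_shift W N₁ N₂ hW h2 (insert j S) _ T rfl hT (by omega) (by omega))
    constructor <;> omega
  · rintro p ⟨hp, hpm⟩ q ⟨hq, hqm⟩ hne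
    have a1 := hpm q hq
    have a2 := hqm p hp
    have b1 : ¬ (q.1 ≤ p.1 ∧ q.1 + q.2 ≤ p.1 + p.2) := fun h => hne (a1 h.1 h.2).symm
    have b2 : ¬ (p.1 ≤ q.1 ∧ p.1 + p.2 ≤ q.1 + q.2) := fun h => hne (a2 h.1 h.2)
    clear a1 a2
    omega
end

section
/- Let (N, W) and (N', W') be complete simple games with exactly two types, with classes N₁ ≻ N₂ and N₁' ≻ N₂' respectively. Then (N, W) and (N', W') are isomorphic (i.e., there is a bijection f : N → N' such that S ∈ W if and only if f(S) ∈ W' for every coalition S) if and only if (|N₁|, |N₂|) = (|N₁'|, |N₂'|) and the set of δ-minimal winning profiles of (N, W) equals the set of δ-minimal winning profiles of (N', W'). -/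
theorem two_desir {n : ℕ} {W : Set (Finset (Fin n))} {N₁ N₂ : Finset (Fin n)}
    (h2 : TwoTypes W N₁ N₂) (i j : Fin n) (h : i ∈ N₁ → j ∈ N₁) : MoreDesirable W j i := by
  obtain ⟨_, _, hd, hu, h1, h22, h12⟩ := h2
  have hmem : ∀ x, x ∈ N₁ ∨ x ∈ N₂ := fun x => by
    have := Finset.mem_univ x
    rw [← hu] at this
    exact Finset.mem_union.1 this
  rcases hmem j with hj | hj
  · rcases hmem i with hi | hi
    · exact (h1 j hj i hi).1
    · exact (h12 j hj i hi).1
  · rcases hmem i with hi | hi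
    · exact (h1 j (h hi) i hi).1
    · exact (h22 j hj i hi).1

theorem mem2_iff {n : ℕ} {W : Set (Finset (Fin n))} {N₁ N₂ : Finset (Fin n)}
    (h2 : TwoTypes W N₁ N₂) (i : Fin n) : i ∈ N₂ ↔ i ∉ N₁ := by
  obtain ⟨_, _, hd, hu, _⟩ := h2
  have := Finset.mem_univ i
  rw [← hu, Finset.mem_union] at this
  have h : i ∈ N₁ → i ∉ N₂ := fun h => Finset.disjoint_left.1 hd h
  tauto

theorem swap_win {n : ℕ} {W : Set (Finset (Fin n))} {S : Finset (Fin n)} {i j : Fin n}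
    (hS : S ∈ W) (hi : i ∈ S) (hj : j ∉ S) (h : MoreDesirable W j i) :
    insert j (S.erase i) ∈ W := by
  apply h
  · simp [hj]
  · simp
  · rwa [Finset.insert_erase hi]

theorem dom_aux {n : ℕ} {W : Set (Finset (Fin n))} {N₁ N₂ : Finset (Fin n)}
    (hW : IsSimpleGame W) (h2 : TwoTypes W N₁ N₂) (T : Finset (Fin n)) :
    ∀ k : ℕ, ∀ S : Finset (Fin n), (S \ T).card = k → S ∈ W →
      ((S \ T) ∩ N₁).card ≤ ((T \ S) ∩ N₁).card → (S \ T).card ≤ (T \ S).card → T ∈ W := by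
  intro k
  induction k with
  | zero =>
    intro S hk hS _ _
    rw [Finset.card_eq_zero, Finset.sdiff_eq_empty_iff_subset] at hk
    exact hW.2.2 S hS T hk
  | succ k ih =>
    intro S hk hS hA hB
    have key : ∀ i ∈ S \ T, ∀ j ∈ T \ S, (i ∈ N₁ → j ∈ N₁) →
        (((S \ T).erase i) ∩ N₁).card ≤ (((T \ S).erase j) ∩ N₁).card → T ∈ W := by
      intro i hi j hj hij hc
      have hi' := Finset.mem_sdiff.1 hi
      have hj' := Finset.mem_sdiff.1 hj
      have e1 : insert j (S.erase i) \ T = (S \ T).erase i := by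
        ext x; simp only [Finset.mem_sdiff, Finset.mem_insert, Finset.mem_erase]; grind
      have e2 : T \ insert j (S.erase i) = (T \ S).erase j := by
        ext x; simp only [Finset.mem_sdiff, Finset.mem_insert, Finset.mem_erase]; grind
      apply ih (insert j (S.erase i))
      · rw [e1, Finset.card_erase_of_mem hi]; omega
      · exact swap_win hS hi'.1 hj'.2 (two_desir h2 i j hij)
      · rw [e1, e2]; exact hc
      · rw [e1, e2, Finset.card_erase_of_mem hi, Finset.card_erase_of_mem hj]; omega
    rcases Finset.eq_empty_or_nonempty ((S \ T) ∩ N₁) with he | ⟨i, hi⟩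
    · obtain ⟨i, hi⟩ := Finset.card_pos.1 (by omega : 0 < (S \ T).card)
      obtain ⟨j, hj⟩ := Finset.card_pos.1 (by omega : 0 < (T \ S).card)
      apply key i hi j hj
      · intro h
        have : i ∈ (S \ T) ∩ N₁ := Finset.mem_inter.2 ⟨hi, h⟩
        rw [he] at this
        simp at this
      · rw [Finset.erase_inter, he]; simp
    · have hp : 0 < ((S \ T) ∩ N₁).card := Finset.card_pos.2 ⟨i, hi⟩
      obtain ⟨j, hj⟩ := Finset.card_pos.1 (by omega : 0 < ((T \ S) ∩ N₁).card)
      apply key i (Finset.mem_inter.1 hi).1 j (Finset.mem_inter.1 hj).1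
      · intro _; exact (Finset.mem_inter.1 hj).2
      · rw [Finset.erase_inter, Finset.erase_inter, Finset.card_erase_of_mem hi,
          Finset.card_erase_of_mem hj]; omega

theorem card_split {n : ℕ} {W : Set (Finset (Fin n))} {N₁ N₂ : Finset (Fin n)}
    (h2 : TwoTypes W N₁ N₂) (S : Finset (Fin n)) :
    (S ∩ N₁).card + (S ∩ N₂).card = S.card := by
  have : S ∩ N₂ = S \ N₁ := by
    ext x; simp [mem2_iff h2]
  rw [this, Finset.card_inter_add_card_sdiff]

theorem dom {n : ℕ} {W : Set (Finset (Fin n))} {N₁ N₂ : Finset (Fin n)}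
    (hW : IsSimpleGame W) (h2 : TwoTypes W N₁ N₂) (S T : Finset (Fin n)) (hS : S ∈ W)
    (hA : (S ∩ N₁).card ≤ (T ∩ N₁).card)
    (hB : (S ∩ N₁).card + (S ∩ N₂).card ≤ (T ∩ N₁).card + (T ∩ N₂).card) : T ∈ W := by
  rw [card_split h2, card_split h2] at hB
  have g : ∀ A B : Finset (Fin n), A.card ≤ B.card → (A \ B).card ≤ (B \ A).card := by
    intro A B h
    have h1 := Finset.card_inter_add_card_sdiff A B
    have h2 := Finset.card_inter_add_card_sdiff B A
    rw [Finset.inter_comm] at h2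
    omega
  have e : ∀ A B : Finset (Fin n), (A \ B) ∩ N₁ = (A ∩ N₁) \ (B ∩ N₁) := by
    intro A B; ext x; simp; tauto
  apply dom_aux hW h2 T _ S rfl hS
  · rw [e, e]; exact g _ _ hA
  · exact g _ _ hB

theorem exists_min {n : ℕ} {W : Set (Finset (Fin n))} {N₁ N₂ : Finset (Fin n)} :
    ∀ k : ℕ, ∀ p : ℕ × ℕ, p.1 + (p.1 + p.2) = k → WinningProfile W N₁ N₂ p →
      ∃ m ∈ DeltaMinProfiles W N₁ N₂, m.1 ≤ p.1 ∧ m.1 + m.2 ≤ p.1 + p.2 := by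
  intro k
  induction k using Nat.strong_induction_on with
  | _ k ih =>
    intro p hp hw
    by_cases h : p ∈ DeltaMinProfiles W N₁ N₂
    · exact ⟨p, h, le_rfl, le_rfl⟩
    · have : ∃ q, WinningProfile W N₁ N₂ q ∧ q.1 ≤ p.1 ∧ q.1 + q.2 ≤ p.1 + p.2 ∧ q ≠ p := by
        by_contra hcon
        apply h
        refine ⟨hw, fun q h1 h2 h3 => ?_⟩
        by_contra h4
        exact hcon ⟨q, h1, h2, h3, h4⟩
      obtain ⟨q, h1, h2, h3, h4⟩ := this
      have h5 : q.1 + (q.1 + q.2) < k := by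
        by_contra hlt
        exact h4 (Prod.ext (by omega) (by omega))
      obtain ⟨m, hm, ha, hb⟩ := ih _ h5 q rfl h1
      exact ⟨m, hm, by omega, by omega⟩

theorem win_iff {n : ℕ} {W : Set (Finset (Fin n))} {N₁ N₂ : Finset (Fin n)}
    (hW : IsSimpleGame W) (h2 : TwoTypes W N₁ N₂) (T : Finset (Fin n)) :
    T ∈ W ↔ ∃ m ∈ DeltaMinProfiles W N₁ N₂, m.1 ≤ (T ∩ N₁).card ∧
      m.1 + m.2 ≤ (T ∩ N₁).card + (T ∩ N₂).card := by
  constructor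
  · intro hT
    exact exists_min _ ((T ∩ N₁).card, (T ∩ N₂).card) rfl ⟨T, hT, rfl, rfl⟩
  · rintro ⟨m, ⟨⟨S, hS, h1, h3⟩, _⟩, ha, hb⟩
    exact dom hW h2 S T hS (by omega) (by omega)

theorem card_image_inter {n n' : ℕ} (f : Fin n → Fin n') (hf : Function.Injective f)
    (A : Finset (Fin n)) (A' : Finset (Fin n')) (h : ∀ i, f i ∈ A' ↔ i ∈ A)
    (S : Finset (Fin n)) : (S.image f ∩ A').card = (S ∩ A).card := by
  rw [← Finset.card_image_of_injective (S ∩ A) hf]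
  congr 1
  ext x
  simp only [Finset.mem_inter, Finset.mem_image]
  constructor
  · rintro ⟨⟨a, ha, rfl⟩, hx⟩
    exact ⟨a, ⟨ha, (h a).1 hx⟩, rfl⟩
  · rintro ⟨a, ⟨ha, hx⟩, rfl⟩
    exact ⟨⟨a, ha, rfl⟩, (h a).2 hx⟩

theorem desir_map {n n' : ℕ} {W : Set (Finset (Fin n))} {W' : Set (Finset (Fin n'))}
    (f : Fin n → Fin n') (hf : Function.Bijective f)
    (hw : ∀ S : Finset (Fin n), S ∈ W ↔ S.image f ∈ W') (i j : Fin n)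
    (h : MoreDesirable W' (f i) (f j)) : MoreDesirable W i j := by
  intro S hi hj hS
  rw [hw, Finset.image_insert] at hS ⊢
  apply h _ _ _ hS
  · rwa [hf.1.mem_finset_image]
  · rwa [hf.1.mem_finset_image]

/-- Part B (uniqueness) of the Carreras–Freixas parametrization theorem:
two complete simple games with exactly two types are isomorphic if and only
if their class cardinalities coincide and their sets of δ-minimal winning
profiles coincide. -/
theorem isomorphic_iff_same_invariants {n n' : ℕ} (hn : 1 ≤ n) (hn' : 1 ≤ n')
    (W : Set (Finset (Fin n))) (W' : Set (Finset (Fin n')))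
    (N₁ N₂ : Finset (Fin n)) (N₁' N₂' : Finset (Fin n'))
    (hW : IsSimpleGame W) (hc : IsCompleteGame W) (h2 : TwoTypes W N₁ N₂)
    (hW' : IsSimpleGame W') (hc' : IsCompleteGame W') (h2' : TwoTypes W' N₁' N₂') :
    (∃ f : Fin n → Fin n', Function.Bijective f ∧
        ∀ S : Finset (Fin n), S ∈ W ↔ S.image f ∈ W') ↔
      (N₁.card, N₂.card) = (N₁'.card, N₂'.card) ∧
        DeltaMinProfiles W N₁ N₂ = DeltaMinProfiles W' N₁' N₂' := by
  have m2 := mem2_iff h2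
  have m2' := mem2_iff h2'
  constructor
  · rintro ⟨f, hf, hw⟩
    have k1 : ∀ i, i ∈ N₁ → ∀ j, j ∉ N₁ → f i ∈ N₁' ∧ f j ∉ N₁' := by
      intro i hi j hj
      have hs := (h2.2.2.2.2.2.2 i hi j ((m2 j).2 hj)).2
      by_contra hcon
      exact hs (desir_map f hf hw j i (two_desir h2' _ _ (by tauto)))
    obtain ⟨a, ha⟩ := h2.1
    obtain ⟨b, hb⟩ := h2.2.1
    have e1 : ∀ i, f i ∈ N₁' ↔ i ∈ N₁ := by
      intro i
      by_cases hi : i ∈ N₁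
      · simp [hi, (k1 i hi b ((m2 b).1 hb)).1]
      · simp [hi, (k1 a ha i hi).2]
    have e2 : ∀ i, f i ∈ N₂' ↔ i ∈ N₂ := by
      intro i; rw [m2, m2', e1]
    have c1 := card_image_inter f hf.1 N₁ N₁' e1
    have c2 := card_image_inter f hf.1 N₂ N₂' e2
    have hsur : ∀ S' : Finset (Fin n'), ∃ S : Finset (Fin n), S.image f = S' := by
      intro S'
      refine ⟨Finset.univ.filter (fun i => f i ∈ S'), ?_⟩
      ext x
      obtain ⟨y, rfl⟩ := hf.2 x
      rw [hf.1.mem_finset_image]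
      simp
    have hwp : WinningProfile W N₁ N₂ = WinningProfile W' N₁' N₂' := by
      funext p
      apply propext
      constructor
      · rintro ⟨S, hS, h1, h3⟩
        exact ⟨S.image f, (hw S).1 hS, by rw [c1, h1], by rw [c2, h3]⟩
      · rintro ⟨S', hS, h1, h3⟩
        obtain ⟨S, rfl⟩ := hsur S'
        exact ⟨S, (hw S).2 hS, by rw [← c1, h1], by rw [← c2, h3]⟩
    refine ⟨?_, by unfold DeltaMinProfiles; rw [hwp]⟩
    have hu : Finset.univ.image f = Finset.univ := Finset.image_univ_of_surjective hf.2
    have u1 := c1 Finset.univ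
    have u2 := c2 Finset.univ
    rw [hu, Finset.univ_inter, Finset.univ_inter] at u1 u2
    rw [u1, u2]
  · rintro ⟨hcard, hD⟩
    obtain ⟨hc1, hc2⟩ := Prod.mk.inj hcard
    have hnn : n = n' := by
      have u := card_split h2 Finset.univ
      have u' := card_split h2' Finset.univ
      simp only [Finset.univ_inter, Finset.card_univ, Fintype.card_fin] at u u'
      omega
    subst hnn
    let e : {x // x ∈ N₁} ≃ {x // x ∈ N₁'} := Finset.equivOfCardEq hc1
    let f := e.extendSubtype
    have e1 : ∀ i, f i ∈ N₁' ↔ i ∈ N₁ := by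
      intro i
      by_cases hi : i ∈ N₁
      · simp [hi, f, e.extendSubtype_mem i hi]
      · simp [hi, f, e.extendSubtype_not_mem i hi]
    have e2 : ∀ i, f i ∈ N₂' ↔ i ∈ N₂ := by
      intro i; rw [m2, m2', e1]
    refine ⟨f, f.bijective, fun S => ?_⟩
    rw [win_iff hW h2, win_iff hW' h2', card_image_inter f f.injective N₁ N₁' e1,
      card_image_inter f f.injective N₂ N₂' e2, hD]
end

section
/- Let n₁, n₂ ≥ 1 be natural numbers and let P be a nonempty finite set of pairs (p₁,p₂) of natural numbers with p₁ ≤ n₁ and p₂ ≤ n₂, such that: if P is a singleton {(m₁,m₂)} then m₁ > 0 and m₂ < n₂; and any two distinct members (p₁,p₂) ≠ (q₁,q₂) of P satisfy p₁ ≠ q₁ and (p₁ > q₁ if and only if p₁ + p₂ < q₁ + q₂). Then there exists a complete simple game on n₁ + n₂ players with exactly two types, with classes N₁ ≻ N₂ of cardinalities n₁ and n₂ respectively, whose set of δ-minimal winning profiles is exactly P. -/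
theorem aux_card_insert {n : ℕ} (N S : Finset (Fin n)) (i : Fin n) (h : i ∉ S) :
    (insert i S ∩ N).card = (S ∩ N).card + if i ∈ N then 1 else 0 := by
  split_ifs with hi
  · rw [Finset.insert_inter_of_mem hi, Finset.card_insert_of_notMem]
    simp [h]
  · rw [Finset.insert_inter_of_notMem hi]; simp

theorem aux_exists {n : ℕ} (A B : Finset (Fin n)) (N₁ N₂ : Finset (Fin n))
    (hd : Disjoint N₁ N₂) (hA : A ⊆ N₁) (hB : B ⊆ N₂) (a b : ℕ)
    (ha : a ≤ A.card) (hb : b ≤ B.card) :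
    ∃ S ⊆ A ∪ B, (S ∩ N₁).card = a ∧ (S ∩ N₂).card = b := by
  obtain ⟨X, hX, rfl⟩ := Finset.exists_subset_card_eq ha
  obtain ⟨Y, hY, rfl⟩ := Finset.exists_subset_card_eq hb
  refine ⟨X ∪ Y, Finset.union_subset_union hX hY, ?_, ?_⟩
  · congr 1
    ext x
    have : x ∈ N₁ → x ∉ N₂ := fun h => Finset.disjoint_left.1 hd h
    have := @hX x
    have := @hY x
    have := @hA x
    have := @hB x
    simp only [Finset.mem_inter, Finset.mem_union]
    tauto
  · congr 1
    ext x
    have : x ∈ N₁ → x ∉ N₂ := fun h => Finset.disjoint_left.1 hd h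
    have := @hX x
    have := @hY x
    have := @hA x
    have := @hB x
    simp only [Finset.mem_inter, Finset.mem_union]
    tauto

/-- Part C (existence) of the Carreras–Freixas parametrization theorem:
every nonempty finite set of profiles satisfying the admissibility
conditions arises as the set of δ-minimal winning profiles of some complete
simple game with exactly two types, with prescribed class cardinalities. -/
theorem exists_game_with_profiles (n₁ n₂ : ℕ) (h₁ : 1 ≤ n₁) (h₂ : 1 ≤ n₂)
    (P : Finset (ℕ × ℕ)) (hP : P.Nonempty)
    (hle : ∀ p ∈ P, p.1 ≤ n₁ ∧ p.2 ≤ n₂)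
    (hsing : ∀ m, P = {m} → 0 < m.1 ∧ m.2 < n₂)
    (hpair : ∀ p ∈ P, ∀ q ∈ P, p ≠ q →
      p.1 ≠ q.1 ∧ (q.1 < p.1 ↔ p.1 + p.2 < q.1 + q.2)) :
    ∃ (W : Set (Finset (Fin (n₁ + n₂)))) (N₁ N₂ : Finset (Fin (n₁ + n₂))),
      IsSimpleGame W ∧ IsCompleteGame W ∧ TwoTypes W N₁ N₂ ∧
      N₁.card = n₁ ∧ N₂.card = n₂ ∧
      DeltaMinProfiles W N₁ N₂ = ↑P := by
  obtain ⟨N₁, hN₁⟩ : ∃ N : Finset (Fin (n₁ + n₂)), N.card = n₁ :=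
    ⟨Finset.univ.map (Fin.castAddEmb n₂), by simp⟩
  obtain ⟨N₂, hN₂def⟩ : ∃ N, N = N₁ᶜ := ⟨_, rfl⟩
  have hN₂ : N₂.card = n₂ := by rw [hN₂def, Finset.card_compl, hN₁]; simp
  have hd : Disjoint N₁ N₂ := by rw [hN₂def]; exact disjoint_compl_right
  have hm : ∀ i, i ∈ N₂ ↔ i ∉ N₁ := by intro i; simp [hN₂def]
  -- domination inside P is trivial
  have hdom : ∀ p ∈ P, ∀ q ∈ P, q.1 ≤ p.1 → q.1 + q.2 ≤ p.1 + p.2 → q = p := by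
    intro p hp q hq h h'
    by_contra hne
    have := hpair p hp q hq (Ne.symm hne)
    omega
  have hex : ∃ p ∈ P, 0 < p.1 ∧ p.2 < n₂ := by
    obtain ⟨p, hp⟩ := hP
    by_cases hs : P = {p}
    · exact ⟨p, hp, hsing p hs⟩
    · obtain ⟨q, hq, hne⟩ : ∃ q ∈ P, q ≠ p := by
        by_contra! hc
        exact hs (Finset.eq_singleton_iff_unique_mem.2 ⟨hp, hc⟩)
      have h3 := hpair p hp q hq (Ne.symm hne)
      have h5 := hle p hp
      have h6 := hle q hq
      by_cases hlt : q.1 < p.1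
      · exact ⟨p, hp, by omega, by omega⟩
      · exact ⟨q, hq, by omega, by omega⟩
  have h0 : ∀ p ∈ P, 0 < p.1 + p.2 := by
    intro p hp
    by_contra hc
    obtain ⟨q, hq, h, -⟩ := hex
    have hne : p ≠ q := by rintro rfl; omega
    have := hpair p hp q hq hne
    omega
  let W : Set (Finset (Fin (n₁ + n₂))) := {S | ∃ p ∈ P, p.1 ≤ (S ∩ N₁).card ∧
    p.1 + p.2 ≤ (S ∩ N₁).card + (S ∩ N₂).card}
  have hW : ∀ S, S ∈ W ↔ ∃ p ∈ P, p.1 ≤ (S ∩ N₁).card ∧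
    p.1 + p.2 ≤ (S ∩ N₁).card + (S ∩ N₂).card := fun S => Iff.rfl
  have hmd : ∀ i j, (j ∈ N₁ → i ∈ N₁) → MoreDesirable W i j := by
    intro i j hij S hi hj hw
    rw [hW] at hw ⊢
    obtain ⟨p, hp, h1, h2⟩ := hw
    refine ⟨p, hp, ?_⟩
    rw [aux_card_insert _ _ _ hj, aux_card_insert _ _ _ hj] at h2
    rw [aux_card_insert _ _ _ hj] at h1
    rw [aux_card_insert _ _ _ hi, aux_card_insert _ _ _ hi]
    simp only [hm] at h1 h2 ⊢
    by_cases ha : i ∈ N₁ <;> by_cases hb : j ∈ N₁ <;> simp [ha, hb] at h1 h2 hij ⊢ <;> omega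
  have hwin : ∀ p ∈ P, WinningProfile W N₁ N₂ p := by
    intro p hp
    obtain ⟨S, -, h1, h2⟩ := aux_exists N₁ N₂ N₁ N₂ hd subset_rfl subset_rfl p.1 p.2
      (by rw [hN₁]; exact (hle p hp).1) (by rw [hN₂]; exact (hle p hp).2)
    exact ⟨S, (hW S).2 ⟨p, hp, by omega, by omega⟩, h1, h2⟩
  refine ⟨W, N₁, N₂, ⟨?_, ?_, ?_⟩, ?_, ⟨?_, ?_, hd, ?_, ?_, ?_, ?_⟩, hN₁, hN₂, ?_⟩
  · obtain ⟨p, hp⟩ := hP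
    have := hle p hp
    refine (hW _).2 ⟨p, hp, ?_⟩
    simp only [Finset.univ_inter, hN₁, hN₂]
    omega
  · rw [hW]
    rintro ⟨p, hp, h1, h2⟩
    have := h0 p hp
    simp at h2
    omega
  · intro S hS T hST
    obtain ⟨p, hp, h1, h2⟩ := (hW _).1 hS
    have a1 := Finset.card_le_card (Finset.inter_subset_inter_right (u := N₁) hST)
    have a2 := Finset.card_le_card (Finset.inter_subset_inter_right (u := N₂) hST)
    exact (hW _).2 ⟨p, hp, by omega, by omega⟩
  · intro i j
    by_cases hi : i ∈ N₁
    · exact Or.inl (hmd i j fun _ => hi)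
    · exact Or.inr (hmd j i fun h => absurd h hi)
  · rw [← Finset.card_pos]; omega
  · rw [← Finset.card_pos]; omega
  · rw [hN₂def]; exact Finset.union_compl N₁
  · exact fun i hi j hj => ⟨hmd i j fun _ => hi, hmd j i fun _ => hj⟩
  · exact fun i hi j hj => ⟨hmd i j fun h => absurd h ((hm j).1 hj),
      hmd j i fun h => absurd h ((hm i).1 hi)⟩
  · intro i hi j hj
    refine ⟨hmd i j fun _ => hi, fun hc => ?_⟩
    obtain ⟨p, hp, hp1, hp2⟩ := hex
    have hl := hle p hp
    obtain ⟨S, hS, h1, h2⟩ := aux_exists (N₁.erase i) (N₂.erase j) N₁ N₂ hd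
      (Finset.erase_subset _ _) (Finset.erase_subset _ _) (p.1 - 1) p.2
      (by rw [Finset.card_erase_of_mem hi]; omega) (by rw [Finset.card_erase_of_mem hj]; omega)
    have hj1 := (hm j).1 hj
    have hi2 : i ∉ N₂ := fun h => (hm i).1 h hi
    have hiS : i ∉ S := by
      intro h
      have := hS h
      simp [hi2] at this
    have hjS : j ∉ S := by
      intro h
      have := hS h
      simp [hj1] at this
    have hw : insert i S ∈ W := by
      refine (hW _).2 ⟨p, hp, ?_⟩
      rw [aux_card_insert _ _ _ hiS, aux_card_insert _ _ _ hiS, if_pos hi, if_neg hi2]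
      omega
    obtain ⟨q, hq, k1, k2⟩ := (hW _).1 (hc S hjS hiS hw)
    rw [aux_card_insert _ _ _ hjS, if_neg hj1] at k1
    rw [aux_card_insert _ _ _ hjS, aux_card_insert _ _ _ hjS, if_pos hj, if_neg hj1] at k2
    have := hdom p hp q hq (by omega) (by omega)
    subst this
    omega
  · ext m
    constructor
    · rintro ⟨⟨S, hS, h1, h2⟩, hmin⟩
      obtain ⟨p, hp, k1, k2⟩ := (hW _).1 hS
      have := hmin p (hwin p hp) (by omega) (by omega)
      rw [← this]
      exact hp
    · intro hmP
      refine ⟨hwin m hmP, ?_⟩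
      rintro q ⟨S, hS, h1, h2⟩ l1 l2
      obtain ⟨p, hp, k1, k2⟩ := (hW _).1 hS
      have := hdom m hmP p hp (by omega) (by omega)
      subst this
      ext <;> omega
end
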